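/- Differential inequality for the trace (Corollary 3.7 in coordinates): let (g, β) be a smooth solution of the coordinate pluriclosed flow on I×U (i.e. g Hermitian positive definite, β antisymmetric, β(t,·) a torsion potential for g(t,·), ∂ₜg_{ij̄} = −S^g_{ij̄} + T²_{ij̄}, ∂ₜβ_{ij} = Δ_gβ_{ij}), with generalized metric G := G(g,β), and let G̃ := G(g̃,β̃) be the generalized metric of a fixed smooth background (g̃, β̃) on U. Fix Λ ≥ 1 and suppose Λ⁻¹·G̃ ≤ G ≤ Λ·G̃ (Loewner order) on I×U. Then there exists a constant K, depending only on n, Λ, and upper bounds on U for the entries of g̃, g̃⁻¹, β̃ and their Wirtinger derivatives up to order two, such that (∂ₜ − Δ)(tr(G⁻¹·G̃)) ≤ −Λ⁻¹·|Υ|²_{g⁻¹,G⁻¹,G} + K on I×U, where Δ := Σ g^{n̄m}·∂_m∂_{n̄} and Υ is the difference of the Chern connections of G and G̃. -/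

import Mathlib

open Matrix
open scoped ComplexOrder

noncomputable section

/-- Spatial Wirtinger derivative `∂ᵢ f = ½(∂f/∂xᵢ − i·∂f/∂yᵢ)` of `f : ℝ × ℂⁿ → ℂ`,
computed via the real Fréchet derivative in the spatial directions. -/
def wdP {n : ℕ} (i : Fin n) (f : ℝ × (Fin n → ℂ) → ℂ) (p : ℝ × (Fin n → ℂ)) : ℂ :=
  (fderiv ℝ f p (0, Pi.single i 1) - Complex.I * fderiv ℝ f p (0, Pi.single i Complex.I)) / 2

/-- Spatial conjugate Wirtinger derivative `∂_{ī} f = ½(∂f/∂xᵢ + i·∂f/∂yᵢ)`. -/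
def wdbP {n : ℕ} (i : Fin n) (f : ℝ × (Fin n → ℂ) → ℂ) (p : ℝ × (Fin n → ℂ)) : ℂ :=
  (fderiv ℝ f p (0, Pi.single i 1) + Complex.I * fderiv ℝ f p (0, Pi.single i Complex.I)) / 2

/-- Time derivative `∂ₜ f` of `f : ℝ × ℂⁿ → ℂ`. -/
def dtP {n : ℕ} (f : ℝ × (Fin n → ℂ) → ℂ) (p : ℝ × (Fin n → ℂ)) : ℂ :=
  fderiv ℝ f p (1, 0)

/-- Entrywise spatial Wirtinger derivative of a matrix-valued map. -/
def wdPM {n : ℕ} {ι κ : Type*} (i : Fin n) (A : ℝ × (Fin n → ℂ) → Matrix ι κ ℂ)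
    (p : ℝ × (Fin n → ℂ)) : Matrix ι κ ℂ :=
  Matrix.of fun a b => wdP i (fun q => A q a b) p

/-- Entrywise spatial conjugate Wirtinger derivative of a matrix-valued map. -/
def wdbPM {n : ℕ} {ι κ : Type*} (i : Fin n) (A : ℝ × (Fin n → ℂ) → Matrix ι κ ℂ)
    (p : ℝ × (Fin n → ℂ)) : Matrix ι κ ℂ :=
  Matrix.of fun a b => wdbP i (fun q => A q a b) p

/-- Entrywise time derivative of a matrix-valued map. -/
def dtPM {n : ℕ} {ι κ : Type*} (A : ℝ × (Fin n → ℂ) → Matrix ι κ ℂ)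
    (p : ℝ × (Fin n → ℂ)) : Matrix ι κ ℂ :=
  Matrix.of fun a b => dtP (fun q => A q a b) p

/-- The generalized metric associated to a Hermitian metric `g` and a `(2,0)`-form
(antisymmetric matrix) `β`, as a `2n × 2n` block matrix on `T ⊕ T*`. -/
def genMetric {n : ℕ} (g β : Matrix (Fin n) (Fin n) ℂ) :
    Matrix (Fin n ⊕ Fin n) (Fin n ⊕ Fin n) ℂ :=
  Matrix.fromBlocks (g + β * (g⁻¹).map (starRingEnd ℂ) * βᴴ) (β * (g⁻¹).map (starRingEnd ℂ))
    ((g⁻¹).map (starRingEnd ℂ) * βᴴ) ((g⁻¹).map (starRingEnd ℂ))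

/-- Lowered Chern curvature `Ω^h_{ij̄αβ̄} = −∂ᵢ∂_{j̄}h_{αβ̄} + Σ ∂ᵢh_{αγ̄}·h^{γ̄δ}·∂_{j̄}h_{δβ̄}`
of a (time-dependent) Hermitian matrix field `h`, where `h^{γ̄δ} = (h⁻¹) γ δ`. -/
def chernP {n : ℕ} {ι : Type*} [Fintype ι] [DecidableEq ι]
    (h : ℝ × (Fin n → ℂ) → Matrix ι ι ℂ) (i j : Fin n) (a b : ι) (p : ℝ × (Fin n → ℂ)) : ℂ :=
  - wdP i (fun q => wdbP j (fun r => h r a b) q) p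
    + ∑ c : ι, ∑ d : ι, wdP i (fun q => h q a c) p * (h p)⁻¹ c d * wdbP j (fun q => h q d b) p

/-- Chern torsion `T_{ijk̄} = ∂ᵢ g_{jk̄} − ∂ⱼ g_{ik̄}`. -/
def torsionP {n : ℕ} (g : ℝ × (Fin n → ℂ) → Matrix (Fin n) (Fin n) ℂ)
    (i j k : Fin n) (p : ℝ × (Fin n → ℂ)) : ℂ :=
  wdP i (fun q => g q j k) p - wdP j (fun q => g q i k) p

/-- Trace with respect to `g` of the lowered Chern curvature of `h`:
`Σ g^{j̄i}·Ω^h_{ij̄ab̄}`. -/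
def traceChernP {n : ℕ} {ι : Type*} [Fintype ι] [DecidableEq ι]
    (g : ℝ × (Fin n → ℂ) → Matrix (Fin n) (Fin n) ℂ)
    (h : ℝ × (Fin n → ℂ) → Matrix ι ι ℂ) (a b : ι) (p : ℝ × (Fin n → ℂ)) : ℂ :=
  ∑ i : Fin n, ∑ j : Fin n, (g p)⁻¹ j i * chernP h i j a b p

/-- `T²_{ab̄} = Σ T_{aln̄}·conj(T_{bkm̄})·g^{k̄l}·g^{n̄m}`. -/
def torsionSqP {n : ℕ} (g : ℝ × (Fin n → ℂ) → Matrix (Fin n) (Fin n) ℂ)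
    (a b : Fin n) (p : ℝ × (Fin n → ℂ)) : ℂ :=
  ∑ k : Fin n, ∑ l : Fin n, ∑ m : Fin n, ∑ m' : Fin n,
    torsionP g a l m' p * (starRingEnd ℂ) (torsionP g b k m p) * (g p)⁻¹ k l * (g p)⁻¹ m' m

/-- Second Chern covariant derivative
`∇ᵢ∇_{j̄}β_{ab} = ∂ᵢ∂_{j̄}β_{ab} − Σ g^{k̄l}·∂ᵢg_{ak̄}·∂_{j̄}β_{lb} − Σ g^{k̄l}·∂ᵢg_{bk̄}·∂_{j̄}β_{al}`. -/
def nabla2betaP {n : ℕ} (g β : ℝ × (Fin n → ℂ) → Matrix (Fin n) (Fin n) ℂ)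
    (i j a b : Fin n) (p : ℝ × (Fin n → ℂ)) : ℂ :=
  wdP i (fun q => wdbP j (fun r => β r a b) q) p
    - ∑ k : Fin n, ∑ l : Fin n,
        (g p)⁻¹ k l * wdP i (fun q => g q a k) p * wdbP j (fun q => β q l b) p
    - ∑ k : Fin n, ∑ l : Fin n,
        (g p)⁻¹ k l * wdP i (fun q => g q b k) p * wdbP j (fun q => β q a l) p

/-- `Δ_g β_{ab} = Σ g^{j̄i}·∇ᵢ∇_{j̄}β_{ab}`. -/
def lapBetaP {n : ℕ} (g β : ℝ × (Fin n → ℂ) → Matrix (Fin n) (Fin n) ℂ)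
    (a b : Fin n) (p : ℝ × (Fin n → ℂ)) : ℂ :=
  ∑ i : Fin n, ∑ j : Fin n, (g p)⁻¹ j i * nabla2betaP g β i j a b p


/-- The Wirtinger derivative `∂ᵢ f` of a function `f : ℂⁿ → ℂ`. -/
def wd {n : ℕ} (i : Fin n) (f : (Fin n → ℂ) → ℂ) (z : Fin n → ℂ) : ℂ :=
  (fderiv ℝ f z (Pi.single i 1) - Complex.I * fderiv ℝ f z (Pi.single i Complex.I)) / 2

/-- The conjugate Wirtinger derivative `∂_{ī} f` of a function `f : ℂⁿ → ℂ`. -/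
def wdb {n : ℕ} (i : Fin n) (f : (Fin n → ℂ) → ℂ) (z : Fin n → ℂ) : ℂ :=
  (fderiv ℝ f z (Pi.single i 1) + Complex.I * fderiv ℝ f z (Pi.single i Complex.I)) / 2


/-- The Laplacian `Δ f = Σ g^{n̄m}·∂_m∂_{n̄} f` associated to `g`. -/
def lapP {n : ℕ} (g : ℝ × (Fin n → ℂ) → Matrix (Fin n) (Fin n) ℂ)
    (f : ℝ × (Fin n → ℂ) → ℂ) (p : ℝ × (Fin n → ℂ)) : ℂ :=
  ∑ m' : Fin n, ∑ n' : Fin n, (g p)⁻¹ n' m' * wdP m' (fun q => wdbP n' f q) p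

/-- Difference of Chern connections `Υᵢ{}_A{}^D = Σ_C (∂ᵢG_{AC̄}·G^{C̄D} − ∂ᵢG̃_{AC̄}·G̃^{C̄D})`. -/
def UpsP {n : ℕ} {ι : Type*} [Fintype ι] [DecidableEq ι]
    (G Gt : ℝ × (Fin n → ℂ) → Matrix ι ι ℂ) (i : Fin n) (A D : ι)
    (p : ℝ × (Fin n → ℂ)) : ℂ :=
  ∑ C : ι, (wdP i (fun q => G q A C) p * (G p)⁻¹ C D
    - wdP i (fun q => Gt q A C) p * (Gt p)⁻¹ C D)

/-- `|Υ|²_{g⁻¹,G⁻¹,H} = Σ g^{j̄i}·G^{B̄A}·H_{DĒ}·Υᵢ{}_A{}^D·conj(Υⱼ{}_B{}^E)`. -/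
def upsNormP {n : ℕ} {ι : Type*} [Fintype ι] [DecidableEq ι]
    (g : ℝ × (Fin n → ℂ) → Matrix (Fin n) (Fin n) ℂ)
    (G Gt H : ℝ × (Fin n → ℂ) → Matrix ι ι ℂ) (p : ℝ × (Fin n → ℂ)) : ℂ :=
  ∑ i : Fin n, ∑ j : Fin n, ∑ A : ι, ∑ B : ι, ∑ D : ι, ∑ E : ι,
    (g p)⁻¹ j i * (G p)⁻¹ B A * H p D E * UpsP G Gt i A D p *
      (starRingEnd ℂ) (UpsP G Gt j B E p)

/-- `f` and its Wirtinger derivatives up to order two are bounded by `B` at `z`. -/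
def BoundedDerivs2 {n : ℕ} (B : ℝ) (f : (Fin n → ℂ) → ℂ) (z : Fin n → ℂ) : Prop :=
  ‖f z‖ ≤ B ∧ (∀ i : Fin n, ‖wd i f z‖ ≤ B ∧ ‖wdb i f z‖ ≤ B) ∧
    (∀ i j : Fin n, ‖wd i (wd j f) z‖ ≤ B ∧ ‖wd i (wdb j f) z‖ ≤ B ∧
      ‖wdb i (wd j f) z‖ ≤ B ∧ ‖wdb i (wdb j f) z‖ ≤ B)

set_option linter.unusedSectionVars false

/-! ### First order differential operators with constant coefficients -/

/-- A first order differential operator `c₁ ∂_v + c₂ ∂_w`. -/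
structure DOp (E : Type*) where
  c₁ : ℂ
  c₂ : ℂ
  v : E
  w : E

/-- The conjugate operator. -/
def DOp.cj {E : Type*} (D : DOp E) : DOp E :=
  ⟨(starRingEnd ℂ) D.c₁, (starRingEnd ℂ) D.c₂, D.v, D.w⟩

lemma DOp.cj_cj {E : Type*} (D : DOp E) : D.cj.cj = D := by
  cases D; simp [DOp.cj]

section calculus

variable {E : Type*} [NormedAddCommGroup E] [NormedSpace ℝ E]

/-- The operator applied to a function. -/
def LD (D : DOp E) (f : E → ℂ) (p : E) : ℂ :=
  D.c₁ * fderiv ℝ f p D.v + D.c₂ * fderiv ℝ f p D.w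

/-- Smooth functions on a set. -/
def Sm (O : Set E) (f : E → ℂ) : Prop := ContDiffOn ℝ (⊤ : ℕ∞) f O

variable {O : Set E}

lemma Sm.diffAt {f : E → ℂ} (hO : IsOpen O) (hf : Sm O f) {p : E} (hp : p ∈ O) :
    DifferentiableAt ℝ f p :=
  (ContDiffOn.contDiffAt hf (hO.mem_nhds hp)).differentiableAt (by simp)

lemma Sm.add {f k : E → ℂ} (hf : Sm O f) (hk : Sm O k) : Sm O (fun q => f q + k q) :=
  ContDiffOn.add hf hk

lemma Sm.sub {f k : E → ℂ} (hf : Sm O f) (hk : Sm O k) : Sm O (fun q => f q - k q) :=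
  ContDiffOn.sub hf hk

lemma Sm.neg {f : E → ℂ} (hf : Sm O f) : Sm O (fun q => - f q) :=
  ContDiffOn.neg hf

lemma Sm.mul {f k : E → ℂ} (hf : Sm O f) (hk : Sm O k) : Sm O (fun q => f q * k q) :=
  ContDiffOn.mul hf hk

lemma Sm.sum {ι : Type*} {s : Finset ι} {f : ι → E → ℂ} (hf : ∀ i ∈ s, Sm O (f i)) :
    Sm O (fun q => ∑ i ∈ s, f i q) :=
  ContDiffOn.sum hf

lemma Sm.prod {ι : Type*} {s : Finset ι} {f : ι → E → ℂ} (hf : ∀ i ∈ s, Sm O (f i)) :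
    Sm O (fun q => ∏ i ∈ s, f i q) :=
  contDiffOn_prod hf

lemma Sm.const (c : ℂ) : Sm O (fun _ : E => c) := contDiffOn_const

lemma Sm.cj {f : E → ℂ} (hf : Sm O f) : Sm O (fun q => (starRingEnd ℂ) (f q)) :=
  (Complex.conjCLE : ℂ ≃L[ℝ] ℂ).contDiff.comp_contDiffOn hf

lemma Sm.congr {f k : E → ℂ} (hf : Sm O f) (h : ∀ q ∈ O, k q = f q) : Sm O k :=
  ContDiffOn.congr hf h

lemma Sm.LD {f : E → ℂ} (hO : IsOpen O) (hf : Sm O f) (D : DOp E) : Sm O (LD D f) := by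
  have h1 : ContDiffOn ℝ (⊤ : ℕ∞) (fderiv ℝ f) O :=
    ContDiffOn.fderiv_of_isOpen hf hO (by simp)
  have h2 : ∀ v : E, Sm O (fun q => fderiv ℝ f q v) := fun v =>
    ContDiffOn.clm_apply h1 contDiffOn_const
  exact ((Sm.const D.c₁).mul (h2 _)).add ((Sm.const D.c₂).mul (h2 _))

lemma LD_congr (hO : IsOpen O) {f k : E → ℂ} (h : ∀ q ∈ O, f q = k q) (D : DOp E) {p : E}
    (hp : p ∈ O) : LD D f p = LD D k p := by
  have : f =ᶠ[nhds p] k := by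
    filter_upwards [hO.mem_nhds hp] with q hq using h q hq
  unfold LD
  rw [this.fderiv_eq]

lemma LD_const (D : DOp E) (c : ℂ) (p : E) : LD D (fun _ => c) p = 0 := by
  simp [LD]

lemma LD_add (hO : IsOpen O) {f k : E → ℂ} (hf : Sm O f) (hk : Sm O k) (D : DOp E) {p : E}
    (hp : p ∈ O) : LD D (fun q => f q + k q) p = LD D f p + LD D k p := by
  unfold LD
  rw [fderiv_fun_add (hf.diffAt hO hp) (hk.diffAt hO hp)]
  simp; ring

lemma LD_neg (D : DOp E) {f : E → ℂ} (p : E) : LD D (fun q => - f q) p = - LD D f p := by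
  unfold LD
  rw [fderiv_fun_neg]
  simp; ring

lemma LD_mul (hO : IsOpen O) {f k : E → ℂ} (hf : Sm O f) (hk : Sm O k) (D : DOp E) {p : E}
    (hp : p ∈ O) : LD D (fun q => f q * k q) p = LD D f p * k p + f p * LD D k p := by
  unfold LD
  rw [fderiv_fun_mul (hf.diffAt hO hp) (hk.diffAt hO hp)]
  simp; ring

lemma LD_sum (hO : IsOpen O) {ι : Type*} {s : Finset ι} {f : ι → E → ℂ}
    (hf : ∀ i ∈ s, Sm O (f i)) (D : DOp E) {p : E} (hp : p ∈ O) :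
    LD D (fun q => ∑ i ∈ s, f i q) p = ∑ i ∈ s, LD D (f i) p := by
  unfold LD
  rw [fderiv_fun_sum (fun i hi => (hf i hi).diffAt hO hp)]
  simp [Finset.mul_sum, Finset.sum_add_distrib]

lemma LD_cj (hO : IsOpen O) {f : E → ℂ} (hf : Sm O f) (D : DOp E) {p : E} (hp : p ∈ O) :
    LD D (fun q => (starRingEnd ℂ) (f q)) p = (starRingEnd ℂ) (LD D.cj f p) := by
  have h : fderiv ℝ (fun q => (starRingEnd ℂ) (f q)) p =
      ((Complex.conjCLE : ℂ ≃L[ℝ] ℂ) : ℂ →L[ℝ] ℂ).comp (fderiv ℝ f p) :=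
    ((Complex.conjCLE : ℂ ≃L[ℝ] ℂ).hasFDerivAt.comp p (hf.diffAt hO hp).hasFDerivAt).fderiv
  unfold LD DOp.cj
  rw [h]
  simp

lemma LD_LD (hO : IsOpen O) {f : E → ℂ} (hf : Sm O f) (D D' : DOp E) {p : E} (hp : p ∈ O) :
    LD D (LD D' f) p =
      D.c₁ * (D'.c₁ * fderiv ℝ (fderiv ℝ f) p D.v D'.v + D'.c₂ * fderiv ℝ (fderiv ℝ f) p D.v D'.w)
      + D.c₂ * (D'.c₁ * fderiv ℝ (fderiv ℝ f) p D.w D'.v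
        + D'.c₂ * fderiv ℝ (fderiv ℝ f) p D.w D'.w) := by
  have h1 : ContDiffOn ℝ (⊤ : ℕ∞) (fderiv ℝ f) O :=
    ContDiffOn.fderiv_of_isOpen hf hO (by simp)
  have h2 : ∀ v : E, Sm O (fun q => fderiv ℝ f q v) := fun v =>
    ContDiffOn.clm_apply h1 contDiffOn_const
  have h3 : DifferentiableAt ℝ (fderiv ℝ f) p :=
    (h1.contDiffAt (hO.mem_nhds hp)).differentiableAt (by simp)
  have h4 : ∀ v u : E, fderiv ℝ (fun q => fderiv ℝ f q v) p u = fderiv ℝ (fderiv ℝ f) p u v := by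
    intro v u
    rw [fderiv_clm_apply h3 (differentiableAt_const v)]
    simp
  have h5 : LD D' f = fun q => D'.c₁ * fderiv ℝ f q D'.v + D'.c₂ * fderiv ℝ f q D'.w := rfl
  rw [h5]
  rw [LD_add hO ((Sm.const _).mul (h2 _)) ((Sm.const _).mul (h2 _)) D hp,
    LD_mul hO (Sm.const _) (h2 _) D hp, LD_mul hO (Sm.const _) (h2 _) D hp, LD_const, LD_const]
  simp only [LD, h4]
  ring

lemma LD_comm (hO : IsOpen O) {f : E → ℂ} (hf : Sm O f) (D D' : DOp E) {p : E} (hp : p ∈ O) :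
    LD D (LD D' f) p = LD D' (LD D f) p := by
  rw [LD_LD hO hf D D' hp, LD_LD hO hf D' D hp]
  have hs : IsSymmSndFDerivAt ℝ f p :=
    (ContDiffOn.contDiffAt hf (hO.mem_nhds hp)).isSymmSndFDerivAt
      (by rw [minSmoothness_of_isRCLikeNormedField]; exact WithTop.coe_le_coe.2 le_top)
  rw [hs.eq D.v D'.v, hs.eq D.v D'.w, hs.eq D.w D'.v, hs.eq D.w D'.w]
  ring

/-! ### Matrix fields -/

/-- Entrywise derivative of a matrix field. -/
def LM {ι κ : Type*} (D : DOp E) (A : E → Matrix ι κ ℂ) (p : E) : Matrix ι κ ℂ :=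
  Matrix.of fun a b => LD D (fun q => A q a b) p

/-- Smooth matrix fields. -/
def SmM {ι κ : Type*} (O : Set E) (A : E → Matrix ι κ ℂ) : Prop :=
  ∀ a b, Sm O (fun q => A q a b)

section mat
variable {ι κ μ : Type*} [Fintype ι] [DecidableEq ι] [Fintype κ] [DecidableEq κ]

lemma SmM.LM {A : E → Matrix ι κ ℂ} (hO : IsOpen O) (hA : SmM O A) (D : DOp E) :
    SmM O (LM D A) := fun a b => (hA a b).LD hO D

lemma SmM.add {A B : E → Matrix ι κ ℂ} (hA : SmM O A) (hB : SmM O B) :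
    SmM O (fun q => A q + B q) := fun a b => (hA a b).add (hB a b)

lemma SmM.neg {A : E → Matrix ι κ ℂ} (hA : SmM O A) :
    SmM O (fun q => - A q) := fun a b => (hA a b).neg

lemma SmM.mul {A : E → Matrix ι κ ℂ} {B : E → Matrix κ μ ℂ} (hA : SmM O A) (hB : SmM O B) :
    SmM O (fun q => A q * B q) := fun a b => by
  simp only [Matrix.mul_apply]
  exact Sm.sum fun i _ => (hA a i).mul (hB i b)

lemma SmM.ct {A : E → Matrix ι κ ℂ} (hA : SmM O A) :
    SmM O (fun q => (A q)ᴴ) := fun a b => (hA b a).cj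

lemma SmM.tr {A : E → Matrix ι κ ℂ} (hA : SmM O A) :
    SmM O (fun q => (A q)ᵀ) := fun a b => hA b a

lemma SmM.const (A : Matrix ι κ ℂ) : SmM O (fun _ : E => A) := fun _ _ => Sm.const _

lemma SmM.congr {A B : E → Matrix ι κ ℂ} (hA : SmM O A) (h : ∀ q ∈ O, B q = A q) : SmM O B :=
  fun a b => (hA a b).congr fun q hq => by rw [h q hq]

lemma SmM.det {A : E → Matrix ι ι ℂ} (hA : SmM O A) : Sm O (fun q => (A q).det) := by
  simp only [Matrix.det_apply']
  exact Sm.sum fun i _ => (Sm.const _).mul (Sm.prod fun j _ => hA _ _)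

lemma SmM.inv {A : E → Matrix ι ι ℂ} (hA : SmM O A) (hu : ∀ q ∈ O, IsUnit (A q)) :
    SmM O (fun q => (A q)⁻¹) := by
  intro a b
  have h1 : Sm O (fun q => ((A q).det)⁻¹) :=
    ContDiffOn.inv hA.det fun q hq => ((Matrix.isUnit_iff_isUnit_det _).1 (hu q hq)).ne_zero
  have h2 : Sm O (fun q => (A q).adjugate a b) := by
    simp only [Matrix.adjugate_apply]
    refine SmM.det (A := fun q => (A q).updateRow b (Pi.single a 1)) ?_
    intro c d
    by_cases h : c = b
    · subst h; simp only [Matrix.updateRow_self]; exact Sm.const _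
    · simp only [Matrix.updateRow_ne h]; exact hA c d
  refine (h1.mul h2).congr fun q _ => ?_
  change (A q)⁻¹ a b = _
  rw [Matrix.inv_def]
  simp

lemma SmM.trace {A : E → Matrix ι ι ℂ} (hA : SmM O A) : Sm O (fun q => (A q).trace) :=
  Sm.sum fun i _ => hA i i

lemma SmM.fromBlocks {A : E → Matrix ι ι ℂ} {B : E → Matrix ι κ ℂ} {C : E → Matrix κ ι ℂ}
    {D : E → Matrix κ κ ℂ} (hA : SmM O A) (hB : SmM O B) (hC : SmM O C) (hD : SmM O D) :
    SmM O (fun q => Matrix.fromBlocks (A q) (B q) (C q) (D q)) := by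
  rintro (a | a) (b | b)
  · exact hA a b
  · exact hB a b
  · exact hC a b
  · exact hD a b

lemma LM_congr (hO : IsOpen O) {A B : E → Matrix ι κ ℂ} (h : ∀ q ∈ O, A q = B q) (D : DOp E)
    {p : E} (hp : p ∈ O) : LM D A p = LM D B p := by
  ext a b
  exact LD_congr hO (fun q hq => by rw [h q hq]) D hp

lemma LM_const (D : DOp E) (A : Matrix ι κ ℂ) (p : E) : LM D (fun _ => A) p = 0 := by
  ext a b
  exact LD_const D _ p

lemma LM_add (hO : IsOpen O) {A B : E → Matrix ι κ ℂ} (hA : SmM O A) (hB : SmM O B) (D : DOp E)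
    {p : E} (hp : p ∈ O) : LM D (fun q => A q + B q) p = LM D A p + LM D B p := by
  ext a b
  exact LD_add hO (hA a b) (hB a b) D hp

lemma LM_neg (D : DOp E) (A : E → Matrix ι κ ℂ) (p : E) :
    LM D (fun q => - A q) p = - LM D A p := by
  ext a b
  exact LD_neg D p

lemma LM_mul (hO : IsOpen O) {A : E → Matrix ι κ ℂ} {B : E → Matrix κ μ ℂ} (hA : SmM O A)
    (hB : SmM O B) (D : DOp E) {p : E} (hp : p ∈ O) :
    LM D (fun q => A q * B q) p = LM D A p * B p + A p * LM D B p := by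
  ext a b
  simp only [LM, Matrix.of_apply, Matrix.mul_apply, Matrix.add_apply]
  rw [LD_sum hO (fun i _ => (hA a i).mul (hB i b)) D hp, ← Finset.sum_add_distrib]
  exact Finset.sum_congr rfl fun i _ => LD_mul hO (hA a i) (hB i b) D hp

lemma LM_ct (hO : IsOpen O) {A : E → Matrix ι κ ℂ} (hA : SmM O A) (D : DOp E) {p : E}
    (hp : p ∈ O) : LM D (fun q => (A q)ᴴ) p = (LM D.cj A p)ᴴ := by
  ext a b
  exact LD_cj hO (hA b a) D hp

lemma LM_tr (A : E → Matrix ι κ ℂ) (D : DOp E) (p : E) :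
    LM D (fun q => (A q)ᵀ) p = (LM D A p)ᵀ := rfl

lemma LM_comm (hO : IsOpen O) {A : E → Matrix ι κ ℂ} (hA : SmM O A) (D D' : DOp E) {p : E}
    (hp : p ∈ O) : LM D (LM D' A) p = LM D' (LM D A) p := by
  ext a b
  exact LD_comm hO (hA a b) D D' hp

lemma LM_trace (hO : IsOpen O) {A : E → Matrix ι ι ℂ} (hA : SmM O A) (D : DOp E) {p : E}
    (hp : p ∈ O) : LD D (fun q => (A q).trace) p = (LM D A p).trace :=
  LD_sum hO (fun i _ => hA i i) D hp

lemma LM_fromBlocks (A : E → Matrix ι ι ℂ) (B : E → Matrix ι κ ℂ) (C : E → Matrix κ ι ℂ)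
    (F : E → Matrix κ κ ℂ) (D : DOp E) (p : E) :
    LM D (fun q => Matrix.fromBlocks (A q) (B q) (C q) (F q)) p =
      Matrix.fromBlocks (LM D A p) (LM D B p) (LM D C p) (LM D F p) := by
  ext (a | a) (b | b) <;> rfl

lemma LM_inv (hO : IsOpen O) {A : E → Matrix ι ι ℂ} (hA : SmM O A)
    (hu : ∀ q ∈ O, IsUnit (A q)) (D : DOp E) {p : E} (hp : p ∈ O) :
    LM D (fun q => (A q)⁻¹) p = - ((A p)⁻¹ * LM D A p * (A p)⁻¹) := by
  have hd : ∀ q ∈ O, IsUnit (A q).det := fun q hq => (Matrix.isUnit_iff_isUnit_det _).1 (hu q hq)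
  have h1 := LM_mul hO (hA.inv hu) hA D hp
  rw [LM_congr hO (B := fun _ => 1) (fun q hq => Matrix.nonsing_inv_mul _ (hd q hq)) D hp,
    LM_const] at h1
  have h2 : LM D (fun q => (A q)⁻¹) p * A p = - ((A p)⁻¹ * LM D A p) :=
    eq_neg_of_add_eq_zero_left h1.symm
  calc LM D (fun q => (A q)⁻¹) p = (LM D (fun q => (A q)⁻¹) p * A p) * (A p)⁻¹ := by
        rw [Matrix.mul_assoc, Matrix.mul_nonsing_inv _ (hd p hp), Matrix.mul_one]
    _ = _ := by rw [h2, Matrix.neg_mul]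

end mat
end calculus

/-! ### Chern curvature and the second derivative of the trace -/

section chern

variable {E : Type*} [NormedAddCommGroup E] [NormedSpace ℝ E] {O : Set E}
variable {ι : Type*} [Fintype ι] [DecidableEq ι]

/-- Lowered Chern curvature in matrix form. -/
def Ch (D D' : DOp E) (h : E → Matrix ι ι ℂ) (p : E) : Matrix ι ι ℂ :=
  - LM D (LM D' h) p + LM D h p * (h p)⁻¹ * LM D' h p

lemma LM_LM_inv_mul (hO : IsOpen O) {G H : E → Matrix ι ι ℂ} (hG : SmM O G) (hH : SmM O H)
    (hu : ∀ q ∈ O, IsUnit (G q)) (D D' : DOp E) {p : E} (hp : p ∈ O) :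
    LM D (LM D' (fun q => (G q)⁻¹ * H q)) p =
      (G p)⁻¹ * LM D G p * (G p)⁻¹ * LM D' G p * (G p)⁻¹ * H p
      - (G p)⁻¹ * LM D (LM D' G) p * (G p)⁻¹ * H p
      + (G p)⁻¹ * LM D' G p * (G p)⁻¹ * LM D G p * (G p)⁻¹ * H p
      - (G p)⁻¹ * LM D' G p * (G p)⁻¹ * LM D H p
      - (G p)⁻¹ * LM D G p * (G p)⁻¹ * LM D' H p
      + (G p)⁻¹ * LM D (LM D' H) p := by
  have hW : SmM O (fun q => (G q)⁻¹) := hG.inv hu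
  have h1 : ∀ q ∈ O, LM D' (fun q => (G q)⁻¹ * H q) q =
      - ((G q)⁻¹ * LM D' G q * (G q)⁻¹ * H q) + (G q)⁻¹ * LM D' H q := by
    intro q hq
    rw [LM_mul hO hW hH D' hq, LM_inv hO hG hu D' hq, Matrix.neg_mul]
  have hb := hG.LM hO D'
  have hy := hH.LM hO D'
  rw [LM_congr hO h1 D hp, LM_add hO (((hW.mul hb).mul hW).mul hH).neg (hW.mul hy) D hp, LM_neg,
    LM_mul hO ((hW.mul hb).mul hW) hH D hp, LM_mul hO (hW.mul hb) hW D hp,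
    LM_mul hO hW hb D hp, LM_mul hO hW hy D hp, LM_inv hO hG hu D hp]
  noncomm_ring

lemma trace_alg (W H V a b c x y z : Matrix ι ι ℂ) (hVH : V * H = 1) (hHV : H * V = 1) :
    (W * a * W * b * W * H - W * c * W * H + W * b * W * a * W * H - W * b * W * x
      - W * a * W * y + W * z).trace =
    (W * (-c + a * W * b) * W * H).trace
      + (W * (a * W - x * V) * H * (W * b - V * y)).trace
      - (W * (-z + x * V * y)).trace := by
  have h1 : W * (a * W - x * V) * H * (W * b - V * y) =
      (W * a * W * H - W * x) * (W * b) - W * a * W * y + W * x * V * y := by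
    have e1 : W * (a * W - x * V) * H = W * a * W * H - W * x := by
      have : W * (a * W - x * V) * H = W * a * W * H - W * x * (V * H) := by noncomm_ring
      rw [this, hVH, mul_one]
    have e2 : W * a * W * H * (V * y) = W * a * W * y := by
      have : W * a * W * H * (V * y) = W * a * W * (H * V) * y := by noncomm_ring
      rw [this, hHV, mul_one]
    rw [e1, mul_sub, sub_mul _ _ (V * y), e2]
    noncomm_ring
  have h2 : ((W * a * W * H - W * x) * (W * b)).trace =
      ((W * b) * (W * a * W * H - W * x)).trace := Matrix.trace_mul_comm _ _
  have h3 : ((W * a * W * H - W * x) * (W * b) - W * a * W * y + W * x * V * y).trace =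
      ((W * b) * (W * a * W * H - W * x) - W * a * W * y + W * x * V * y).trace := by
    rw [Matrix.trace_add, Matrix.trace_sub, h2, ← Matrix.trace_sub, ← Matrix.trace_add]
  rw [h1, h3, ← Matrix.trace_add, ← Matrix.trace_sub]
  congr 1
  noncomm_ring

lemma LD_LD_trace (hO : IsOpen O) {G H : E → Matrix ι ι ℂ} (hG : SmM O G) (hH : SmM O H)
    (hu : ∀ q ∈ O, IsUnit (G q)) (huH : ∀ q ∈ O, IsUnit (H q)) (D D' : DOp E) {p : E}
    (hp : p ∈ O) :
    LD D (LD D' (fun q => ((G q)⁻¹ * H q).trace)) p =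
      ((G p)⁻¹ * Ch D D' G p * (G p)⁻¹ * H p).trace
      + ((G p)⁻¹ * (LM D G p * (G p)⁻¹ - LM D H p * (H p)⁻¹) * H p *
          ((G p)⁻¹ * LM D' G p - (H p)⁻¹ * LM D' H p)).trace
      - ((G p)⁻¹ * Ch D D' H p).trace := by
  have hW : SmM O (fun q => (G q)⁻¹) := hG.inv hu
  have hWH := hW.mul hH
  have hd := (Matrix.isUnit_iff_isUnit_det _).1 (huH p hp)
  rw [LD_congr hO (fun q hq => LM_trace hO hWH D' hq) D hp, LM_trace hO (hWH.LM hO D') D hp,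
    LM_LM_inv_mul hO hG hH hu D D' hp,
    trace_alg _ _ _ _ _ _ _ _ _ (Matrix.nonsing_inv_mul _ hd) (Matrix.mul_nonsing_inv _ hd)]
  rfl

lemma LD_trace (hO : IsOpen O) {G H : E → Matrix ι ι ℂ} (hG : SmM O G) (hH : SmM O H)
    (hu : ∀ q ∈ O, IsUnit (G q)) (D : DOp E) {p : E} (hp : p ∈ O) (hD : LM D H p = 0) :
    LD D (fun q => ((G q)⁻¹ * H q).trace) p = - ((G p)⁻¹ * LM D G p * (G p)⁻¹ * H p).trace := by
  have hW : SmM O (fun q => (G q)⁻¹) := hG.inv hu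
  rw [LM_trace hO (hW.mul hH) D hp, LM_mul hO hW hH D hp, LM_inv hO hG hu D hp, hD]
  simp

lemma chern_alg (P Pi Q Qi D Di p1 p2 p12 d1 d2 d12 q1 q2 q12 : Matrix ι ι ℂ)
    (hP : Pi * P = 1) (hQ : Q * Qi = 1)
    (h1 : P * p1 = p1) (h2 : P * p2 = p2) (h12 : P * p12 = p12)
    (k1 : q1 * Q = q1) (k2 : q2 * Q = q2) (k12 : q12 * Q = q12) :
    -(p12 * D * Q + p2 * d1 * Q + p2 * D * q1 + p1 * d2 * Q + P * d12 * Q + P * d2 * q1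
        + p1 * D * q2 + P * d1 * q2 + P * D * q12)
      + (p1 * D * Q + P * d1 * Q + P * D * q1) * (Qi * Di * Pi)
        * (p2 * D * Q + P * d2 * Q + P * D * q2)
    = P * (-(p12 * D + p2 * d1 + p2 * D * q1 + p1 * d2 + d12 + d2 * q1
        + p1 * D * q2 + d1 * q2 + D * q12)
      + (p1 * D + d1 + D * q1) * Di * (p2 * D + d2 + D * q2)) * Q := by
  have e1 : p1 * D * Q + P * d1 * Q + P * D * q1 = P * (p1 * D + d1 + D * q1) * Q := by
    calc _ = P * p1 * D * Q + P * d1 * Q + P * D * (q1 * Q) := by rw [h1, k1]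
      _ = _ := by noncomm_ring
  have e2 : p2 * D * Q + P * d2 * Q + P * D * q2 = P * (p2 * D + d2 + D * q2) * Q := by
    calc _ = P * p2 * D * Q + P * d2 * Q + P * D * (q2 * Q) := by rw [h2, k2]
      _ = _ := by noncomm_ring
  have e3 : p12 * D * Q + p2 * d1 * Q + p2 * D * q1 + p1 * d2 * Q + P * d12 * Q + P * d2 * q1
        + p1 * D * q2 + P * d1 * q2 + P * D * q12 = P * (p12 * D + p2 * d1 + p2 * D * q1 + p1 * d2
        + d12 + d2 * q1 + p1 * D * q2 + d1 * q2 + D * q12) * Q := by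
    calc _ = P * p12 * D * Q + P * p2 * d1 * Q + P * p2 * D * (q1 * Q) + P * p1 * d2 * Q
          + P * d12 * Q + P * d2 * (q1 * Q)
          + P * p1 * D * (q2 * Q) + P * d1 * (q2 * Q) + P * D * (q12 * Q) := by
            rw [h1, h2, h12, k1, k2, k12]
      _ = _ := by noncomm_ring
  have e4 : P * (p1 * D + d1 + D * q1) * Q * (Qi * Di * Pi) * (P * (p2 * D + d2 + D * q2) * Q) =
      P * ((p1 * D + d1 + D * q1) * Di * (p2 * D + d2 + D * q2)) * Q := by
    calc _ = P * (p1 * D + d1 + D * q1) * (Q * Qi) * Di * (Pi * P) * (p2 * D + d2 + D * q2) * Q := by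
          simp only [Matrix.mul_assoc]
      _ = _ := by rw [hP, hQ]; simp only [Matrix.mul_assoc, Matrix.mul_one]
  rw [e1, e2, e3, e4]
  noncomm_ring

end chern

/-! ### The generalized metric -/

section genmetric

open scoped MatrixOrder in
lemma posSemidef_factor {ι : Type*} [Fintype ι] [DecidableEq ι] {A : Matrix ι ι ℂ}
    (hA : A.PosSemidef) : ∃ X : Matrix ι ι ℂ, A = Xᴴ * X := by
  obtain ⟨X, hX⟩ := CStarAlgebra.nonneg_iff_eq_star_mul_self.mp hA.nonneg
  exact ⟨X, hX⟩

variable {n : ℕ}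

/-- unipotent factor -/
def Pm (β : Matrix (Fin n) (Fin n) ℂ) : Matrix (Fin n ⊕ Fin n) (Fin n ⊕ Fin n) ℂ :=
  Matrix.fromBlocks 1 β 0 1

/-- lower unipotent factor -/
def Qm (β : Matrix (Fin n) (Fin n) ℂ) : Matrix (Fin n ⊕ Fin n) (Fin n ⊕ Fin n) ℂ :=
  Matrix.fromBlocks 1 0 β 1

/-- block diagonal factor -/
def Dm (a b : Matrix (Fin n) (Fin n) ℂ) : Matrix (Fin n ⊕ Fin n) (Fin n ⊕ Fin n) ℂ :=
  Matrix.fromBlocks a 0 0 b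

lemma map_conj_inv {g : Matrix (Fin n) (Fin n) ℂ} (hg : g.IsHermitian) :
    (g⁻¹).map (starRingEnd ℂ) = (g⁻¹)ᵀ := by
  have h : (g⁻¹)ᴴ = g⁻¹ := hg.inv
  conv_rhs => rw [← h]
  rfl

lemma genMetric_eq {g β : Matrix (Fin n) (Fin n) ℂ} (hg : g.IsHermitian) :
    genMetric g β = Pm β * Dm g (g⁻¹)ᵀ * Qm βᴴ := by
  simp only [genMetric, map_conj_inv hg, Pm, Dm, Qm, Matrix.fromBlocks_multiply]
  simp

lemma Pm_mul (β γ : Matrix (Fin n) (Fin n) ℂ) : Pm β * Pm γ = Pm (β + γ) := by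
  simp [Pm, Matrix.fromBlocks_multiply, add_comm]

lemma Qm_mul (β γ : Matrix (Fin n) (Fin n) ℂ) : Qm β * Qm γ = Qm (β + γ) := by
  simp [Qm, Matrix.fromBlocks_multiply]

lemma Pm_zero : Pm (0 : Matrix (Fin n) (Fin n) ℂ) = 1 := Matrix.fromBlocks_one

lemma Qm_zero : Qm (0 : Matrix (Fin n) (Fin n) ℂ) = 1 := Matrix.fromBlocks_one

lemma Dm_mul (a b c d : Matrix (Fin n) (Fin n) ℂ) : Dm a b * Dm c d = Dm (a * c) (b * d) := by
  simp [Dm, Matrix.fromBlocks_multiply]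

lemma genMetric_mul_inv {g β : Matrix (Fin n) (Fin n) ℂ} (hg : g.PosDef) :
    genMetric g β * (Qm (-βᴴ) * Dm g⁻¹ gᵀ * Pm (-β)) = 1 := by
  have hu : IsUnit g.det := (Matrix.isUnit_iff_isUnit_det _).1 hg.isUnit
  rw [genMetric_eq hg.isHermitian]
  calc _ = Pm β * (Dm g (g⁻¹)ᵀ * (Qm βᴴ * Qm (-βᴴ)) * Dm g⁻¹ gᵀ) * Pm (-β) := by
        simp only [Matrix.mul_assoc]
    _ = 1 := by
        rw [Qm_mul, add_neg_cancel, Qm_zero, mul_one, Dm_mul, Matrix.mul_nonsing_inv _ hu,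
          ← Matrix.transpose_mul, Matrix.mul_nonsing_inv _ hu, Matrix.transpose_one]
        have : Dm (1 : Matrix (Fin n) (Fin n) ℂ) 1 = 1 := Matrix.fromBlocks_one
        rw [this, mul_one, Pm_mul, add_neg_cancel, Pm_zero]

lemma genMetric_inv {g β : Matrix (Fin n) (Fin n) ℂ} (hg : g.PosDef) :
    (genMetric g β)⁻¹ = Qm (-βᴴ) * Dm g⁻¹ gᵀ * Pm (-β) :=
  Matrix.inv_eq_right_inv (genMetric_mul_inv hg)

lemma genMetric_isUnit {g : Matrix (Fin n) (Fin n) ℂ} (β : Matrix (Fin n) (Fin n) ℂ)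
    (hg : g.PosDef) : IsUnit (genMetric g β) :=
  IsUnit.of_mul_eq_one _ (genMetric_mul_inv hg)

/-- The inverse of the generalized metric is its transpose with the two blocks swapped. -/
lemma genMetric_inv_eq_swap {g β : Matrix (Fin n) (Fin n) ℂ} (hg : g.PosDef) (hβ : βᵀ = -β) :
    (genMetric g β)⁻¹ = (genMetric g β)ᵀ.submatrix Sum.swap Sum.swap := by
  have hu : IsUnit g.det := (Matrix.isUnit_iff_isUnit_det _).1 hg.isUnit
  have hβ' : (βᴴ)ᵀ = -βᴴ := by
    have := congrArg Matrix.conjTranspose hβ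
    rw [Matrix.conjTranspose_neg] at this
    exact this
  rw [genMetric_inv hg]
  simp only [genMetric, map_conj_inv hg.isHermitian, Pm, Qm, Dm, Matrix.fromBlocks_multiply,
    Matrix.fromBlocks_transpose, Matrix.fromBlocks_submatrix_sum_swap_sum_swap]
  simp [Matrix.transpose_mul, hβ, hβ', Matrix.mul_assoc]
  rw [add_comm]

lemma genMetric_posSemidef {g : Matrix (Fin n) (Fin n) ℂ} (β : Matrix (Fin n) (Fin n) ℂ)
    (hg : g.PosDef) : (genMetric g β).PosSemidef := by
  have h1 : (Dm g (g⁻¹)ᵀ).PosSemidef := by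
    obtain ⟨X, hX⟩ := posSemidef_factor hg.posSemidef
    obtain ⟨Y, hY⟩ := posSemidef_factor hg.inv.posSemidef.transpose
    have : Dm g (g⁻¹)ᵀ = (Dm X Y)ᴴ * Dm X Y := by
      rw [hY]
      conv_lhs => rw [hX]
      simp [Dm, Matrix.fromBlocks_conjTranspose, Matrix.fromBlocks_multiply]
    rw [this]
    exact Matrix.posSemidef_conjTranspose_mul_self _
  have h2 : Qm βᴴ = (Pm β)ᴴ := by simp [Qm, Pm, Matrix.fromBlocks_conjTranspose]
  rw [genMetric_eq hg.isHermitian, h2]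
  exact h1.mul_mul_conjTranspose_same _

lemma genMetric_inv_posSemidef {g β : Matrix (Fin n) (Fin n) ℂ} (hg : g.PosDef) (hβ : βᵀ = -β) :
    (genMetric g β)⁻¹.PosSemidef := by
  rw [genMetric_inv_eq_swap hg hβ]
  exact (genMetric_posSemidef β hg).transpose.submatrix _

end genmetric

/-! ### Positivity -/

section pos

lemma posSemidef_entry {ι : Type*} [Fintype ι] [DecidableEq ι] {A : Matrix ι ι ℂ}
    (hA : A.PosSemidef) (i j : ι) : ‖A i j‖ ≤ (A i i).re + (A j j).re := by
  obtain ⟨X, rfl⟩ := posSemidef_factor hA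
  have hd : ∀ i, ((Xᴴ * X) i i).re = ∑ k, ‖X k i‖ ^ 2 := by
    intro i
    simp only [Matrix.mul_apply, Matrix.conjTranspose_apply, Complex.re_sum]
    refine Finset.sum_congr rfl fun k _ => ?_
    have : star (X k i) * X k i = ((‖X k i‖ ^ 2 : ℝ) : ℂ) := by
      rw [mul_comm]; simpa using Complex.mul_conj' (X k i)
    rw [this, Complex.ofReal_re]
  rw [hd, hd, ← Finset.sum_add_distrib, Matrix.mul_apply]
  refine (norm_sum_le _ _).trans (Finset.sum_le_sum fun k _ => ?_)
  rw [norm_mul, Matrix.conjTranspose_apply, norm_star]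
  nlinarith [sq_nonneg (‖X k i‖ - ‖X k j‖), sq_nonneg ‖X k i‖, sq_nonneg ‖X k j‖]

lemma trace_mul_nonneg {ι : Type*} [Fintype ι] [DecidableEq ι] {A B : Matrix ι ι ℂ}
    (hA : A.PosSemidef) (hB : B.PosSemidef) : 0 ≤ (A * B).trace.re := by
  obtain ⟨X, rfl⟩ := posSemidef_factor hA
  rw [Matrix.mul_assoc, Matrix.trace_mul_comm]
  exact (Complex.le_def.1 (hB.mul_mul_conjTranspose_same X).trace_nonneg).1

/-- Positivity of the quadratic form defining `|Υ|²`. -/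
lemma quad_nonneg {ι κ : Type*} [Fintype ι] [DecidableEq ι] [Fintype κ] [DecidableEq κ]
    {A : Matrix κ κ ℂ} {W H : Matrix ι ι ℂ} (hA : A.PosSemidef) (hW : W.PosSemidef)
    (hH : H.PosSemidef) (Y : κ → Matrix ι ι ℂ) :
    0 ≤ (∑ i, ∑ j, A j i * (W * Y i * H * (Y j)ᴴ).trace).re := by
  obtain ⟨X, rfl⟩ := posSemidef_factor hA
  have key : ∑ i, ∑ j, (Xᴴ * X) j i * (W * Y i * H * (Y j)ᴴ).trace =
      ∑ k, (W * ((∑ i, X k i • Y i) * H * (∑ j, X k j • Y j)ᴴ)).trace := by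
    have : ∀ k, (W * ((∑ i, X k i • Y i) * H * (∑ j, X k j • Y j)ᴴ)).trace =
        ∑ i, ∑ j, X k i * star (X k j) * (W * Y i * H * (Y j)ᴴ).trace := by
      intro k
      simp only [Matrix.conjTranspose_sum, Matrix.conjTranspose_smul, Matrix.sum_mul,
        Matrix.trace_sum, Matrix.smul_mul, Matrix.mul_smul, Matrix.trace_smul,
        smul_eq_mul, Matrix.mul_assoc, Finset.mul_sum]
      rw [Finset.sum_comm]
      refine Finset.sum_congr rfl fun i _ => Finset.sum_congr rfl fun j _ => ?_
      ring
    simp only [this]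
    rw [Finset.sum_comm]
    conv_rhs => rw [Finset.sum_comm]
    rw [Finset.sum_comm]
    refine Finset.sum_congr rfl fun i _ => ?_
    rw [Finset.sum_comm]
    refine Finset.sum_congr rfl fun j _ => ?_
    rw [Matrix.mul_apply, Finset.sum_mul]
    refine Finset.sum_congr rfl fun k _ => ?_
    rw [Matrix.conjTranspose_apply, mul_comm (star _)]
  rw [key, Complex.re_sum]
  exact Finset.sum_nonneg fun k _ => trace_mul_nonneg hW (hH.mul_mul_conjTranspose_same _)

end pos

/-! ### Evolution of the generalized metric -/

section evolution

set_option linter.unusedSimpArgs false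

variable {E : Type*} [NormedAddCommGroup E] [NormedSpace ℝ E] {O : Set E} {n : ℕ}
variable {g β : E → Matrix (Fin n) (Fin n) ℂ}

lemma LM_triple (hO : IsOpen O) {ι : Type*} [Fintype ι] [DecidableEq ι]
    {P D Q : E → Matrix ι ι ℂ} (hP : SmM O P) (hD : SmM O D)
    (hQ : SmM O Q) (X : DOp E) {p : E} (hp : p ∈ O) :
    LM X (fun q => P q * D q * Q q) p =
      LM X P p * D p * Q p + P p * LM X D p * Q p + P p * D p * LM X Q p := by
  rw [LM_mul hO (hP.mul hD) hQ X hp, LM_mul hO hP hD X hp]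
  noncomm_ring

lemma LM_LM_triple (hO : IsOpen O) {ι : Type*} [Fintype ι] [DecidableEq ι]
    {P D Q : E → Matrix ι ι ℂ} (hP : SmM O P) (hD : SmM O D)
    (hQ : SmM O Q) (X Y : DOp E) {p : E} (hp : p ∈ O) :
    LM X (LM Y (fun q => P q * D q * Q q)) p =
      LM X (LM Y P) p * D p * Q p + LM Y P p * LM X D p * Q p + LM Y P p * D p * LM X Q p
      + LM X P p * LM Y D p * Q p + P p * LM X (LM Y D) p * Q p + P p * LM Y D p * LM X Q p
      + LM X P p * D p * LM Y Q p + P p * LM X D p * LM Y Q p + P p * D p * LM X (LM Y Q) p := by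
  have hP' := hP.LM hO Y
  have hD' := hD.LM hO Y
  have hQ' := hQ.LM hO Y
  rw [LM_congr hO (fun q hq => LM_triple hO hP hD hQ Y hq) X hp,
    LM_add hO (((hP'.mul hD).mul hQ).add ((hP.mul hD').mul hQ)) ((hP.mul hD).mul hQ') X hp,
    LM_add hO ((hP'.mul hD).mul hQ) ((hP.mul hD').mul hQ) X hp,
    LM_triple hO hP' hD hQ X hp, LM_triple hO hP hD' hQ X hp, LM_triple hO hP hD hQ' X hp]
  noncomm_ring

lemma LM_Pm (X : DOp E) (β : E → Matrix (Fin n) (Fin n) ℂ) (p : E) :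
    LM X (fun q => Pm (β q)) p = Matrix.fromBlocks 0 (LM X β p) 0 0 := by
  unfold Pm
  rw [LM_fromBlocks, LM_const, LM_const]

lemma LM_Qm (X : DOp E) (β : E → Matrix (Fin n) (Fin n) ℂ) (p : E) :
    LM X (fun q => Qm (β q)) p = Matrix.fromBlocks 0 0 (LM X β p) 0 := by
  unfold Qm
  rw [LM_fromBlocks, LM_const, LM_const]

lemma LM_Dm (X : DOp E) (a b : E → Matrix (Fin n) (Fin n) ℂ) (p : E) :
    LM X (fun q => Dm (a q) (b q)) p = Matrix.fromBlocks (LM X a p) 0 0 (LM X b p) := by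
  unfold Dm
  rw [LM_fromBlocks, LM_const]

lemma SmM_Pm (hβ : SmM O β) : SmM O (fun q => Pm (β q)) :=
  (SmM.const _).fromBlocks hβ (SmM.const _) (SmM.const _)

lemma SmM_Qm (hβ : SmM O β) : SmM O (fun q => Qm (β q)) :=
  (SmM.const _).fromBlocks (SmM.const _) hβ (SmM.const _)

lemma SmM_Dm {a b : E → Matrix (Fin n) (Fin n) ℂ} (ha : SmM O a) (hb : SmM O b) :
    SmM O (fun q => Dm (a q) (b q)) :=
  ha.fromBlocks (SmM.const _) (SmM.const _) hb

lemma SmM_h (hg : SmM O g) (hpd : ∀ q ∈ O, (g q).PosDef) : SmM O (fun q => ((g q)⁻¹)ᵀ) :=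
  (hg.inv fun q hq => (hpd q hq).isUnit).tr

lemma SmM_genMetric (hg : SmM O g) (hβ : SmM O β) (hpd : ∀ q ∈ O, (g q).PosDef) :
    SmM O (fun q => genMetric (g q) (β q)) :=
  (((SmM_Pm hβ).mul (SmM_Dm hg (SmM_h hg hpd))).mul (SmM_Qm hβ.ct)).congr
    fun q hq => genMetric_eq (hpd q hq).isHermitian

lemma LM_genMetric (hO : IsOpen O) (hg : SmM O g) (hβ : SmM O β)
    (hpd : ∀ q ∈ O, (g q).PosDef) (X : DOp E) {p : E} (hp : p ∈ O) :
    LM X (fun q => genMetric (g q) (β q)) p = Pm (β p) *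
      Matrix.fromBlocks (LM X g p) (LM X β p * ((g p)⁻¹)ᵀ)
        (((g p)⁻¹)ᵀ * LM X (fun q => (β q)ᴴ) p) (LM X (fun q => ((g q)⁻¹)ᵀ) p) * Qm (β p)ᴴ := by
  have hP := SmM_Pm hβ
  have hD := SmM_Dm hg (SmM_h hg hpd)
  have hQ := SmM_Qm hβ.ct
  rw [LM_congr hO (fun q hq => genMetric_eq (hpd q hq).isHermitian) X hp,
    LM_triple hO hP hD hQ X hp, LM_Pm, LM_Qm, LM_Dm]
  simp [Pm, Qm, Dm, Matrix.fromBlocks_multiply, Matrix.fromBlocks_add, Matrix.mul_assoc,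
    Matrix.add_mul]
  constructor <;> abel

lemma Ch_genMetric (hO : IsOpen O) (hg : SmM O g) (hβ : SmM O β)
    (hpd : ∀ q ∈ O, (g q).PosDef) (X Y : DOp E) {p : E} (hp : p ∈ O) :
    Ch X Y (fun q => genMetric (g q) (β q)) p = Pm (β p) *
      Matrix.fromBlocks
        (Ch X Y g p - LM Y β p * ((g p)⁻¹)ᵀ * LM X (fun q => (β q)ᴴ) p)
        (- (LM X (LM Y β) p * ((g p)⁻¹)ᵀ) - LM Y β p * LM X (fun q => ((g q)⁻¹)ᵀ) p
          + LM X g p * (g p)⁻¹ * LM Y β p * ((g p)⁻¹)ᵀ)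
        (- (((g p)⁻¹)ᵀ * LM X (LM Y (fun q => (β q)ᴴ)) p)
          - LM Y (fun q => ((g q)⁻¹)ᵀ) p * LM X (fun q => (β q)ᴴ) p
          + ((g p)⁻¹)ᵀ * LM X (fun q => (β q)ᴴ) p * (g p)⁻¹ * LM Y g p)
        (- LM X (LM Y (fun q => ((g q)⁻¹)ᵀ)) p
          + LM X (fun q => ((g q)⁻¹)ᵀ) p * (g p)ᵀ * LM Y (fun q => ((g q)⁻¹)ᵀ) p
          + ((g p)⁻¹)ᵀ * LM X (fun q => (β q)ᴴ) p * (g p)⁻¹ * LM Y β p * ((g p)⁻¹)ᵀ)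
        * Qm (β p)ᴴ := by
  have hP := SmM_Pm hβ
  have hD := SmM_Dm hg (SmM_h hg hpd)
  have hQ := SmM_Qm hβ.ct
  have hu : IsUnit (g p).det := (Matrix.isUnit_iff_isUnit_det _).1 (hpd p hp).isUnit
  have e0 : ∀ Z : DOp E, ∀ q ∈ O, LM Z (fun q => genMetric (g q) (β q)) q =
      LM Z (fun q => Pm (β q) * Dm (g q) ((g q)⁻¹)ᵀ * Qm (β q)ᴴ) q := fun Z q hq =>
    LM_congr hO (fun q hq => genMetric_eq (hpd q hq).isHermitian) Z hq
  have hPP : ∀ b : Matrix (Fin n) (Fin n) ℂ,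
      Pm (β p) * Matrix.fromBlocks 0 b 0 0 = Matrix.fromBlocks 0 b 0 0 := by
    intro b; simp [Pm, Matrix.fromBlocks_multiply]
  have hQQ : ∀ b : Matrix (Fin n) (Fin n) ℂ,
      Matrix.fromBlocks 0 0 b 0 * Qm (β p)ᴴ = Matrix.fromBlocks 0 0 b 0 := by
    intro b; simp [Qm, Matrix.fromBlocks_multiply]
  have eP : LM X (LM Y (fun q => Pm (β q))) p = Matrix.fromBlocks 0 (LM X (LM Y β) p) 0 0 := by
    rw [LM_congr hO (fun q _ => LM_Pm Y β q) X hp, LM_fromBlocks, LM_const]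
  have eQ : LM X (LM Y (fun q => Qm (β q)ᴴ)) p =
      Matrix.fromBlocks 0 0 (LM X (LM Y (fun q => (β q)ᴴ)) p) 0 := by
    rw [LM_congr hO (fun q _ => LM_Qm Y (fun q => (β q)ᴴ) q) X hp, LM_fromBlocks, LM_const]
  have eD : LM X (LM Y (fun q => Dm (g q) ((g q)⁻¹)ᵀ)) p =
      Matrix.fromBlocks (LM X (LM Y g) p) 0 0 (LM X (LM Y (fun q => ((g q)⁻¹)ᵀ)) p) := by
    rw [LM_congr hO (fun q _ => LM_Dm Y g (fun q => ((g q)⁻¹)ᵀ) q) X hp, LM_fromBlocks, LM_const]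
  have hh : ((g p)⁻¹)ᵀ * (g p)ᵀ = 1 := by
    rw [← Matrix.transpose_mul, Matrix.mul_nonsing_inv _ hu, Matrix.transpose_one]
  have hh' : (g p)ᵀ * ((g p)⁻¹)ᵀ = 1 := by
    rw [← Matrix.transpose_mul, Matrix.nonsing_inv_mul _ hu, Matrix.transpose_one]
  unfold Ch
  rw [LM_congr hO (e0 Y) X hp, e0 X p hp, e0 Y p hp, genMetric_inv (hpd p hp),
    LM_LM_triple hO hP hD hQ X Y hp, LM_triple hO hP hD hQ X hp, LM_triple hO hP hD hQ Y hp,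
    eP, eQ, eD, LM_Pm, LM_Pm, LM_Qm, LM_Qm, LM_Dm, LM_Dm,
    chern_alg (Pm (β p)) (Pm (-β p)) (Qm (β p)ᴴ) (Qm (-(β p)ᴴ)) _ _ _ _ _ _ _ _ _ _ _
      (by rw [Pm_mul, neg_add_cancel, Pm_zero]) (by rw [Qm_mul, add_neg_cancel, Qm_zero])
      (hPP _) (hPP _) (hPP _) (hQQ _) (hQQ _) (hQQ _)]
  congr 2
  simp only [Dm, Matrix.fromBlocks_multiply, Matrix.fromBlocks_add, Matrix.fromBlocks_neg,
    Matrix.mul_zero, Matrix.zero_mul, add_zero, zero_add]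
  have c1 : ∀ A : Matrix (Fin n) (Fin n) ℂ, A * ((g p)⁻¹)ᵀ * (g p)ᵀ = A := fun A => by
    rw [Matrix.mul_assoc, hh, Matrix.mul_one]
  have c2 : ∀ A : Matrix (Fin n) (Fin n) ℂ, A * (g p)ᵀ * ((g p)⁻¹)ᵀ = A := fun A => by
    rw [Matrix.mul_assoc, hh', Matrix.mul_one]
  rw [Matrix.fromBlocks_inj]
  refine ⟨?_, ?_, ?_, ?_⟩
  · simp only [← Matrix.mul_assoc, c1, c2]
    abel
  · simp only [← Matrix.mul_assoc, c1, c2]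
    abel
  · simp only [← Matrix.mul_assoc, c1, c2]
    abel
  · simp only [← Matrix.mul_assoc, c1, c2]
    abel

end evolution

section evolution2

variable {E : Type*} [NormedAddCommGroup E] [NormedSpace ℝ E] {O : Set E} {n : ℕ}
variable {g β : E → Matrix (Fin n) (Fin n) ℂ}

lemma LM_h (hO : IsOpen O) (hg : SmM O g) (hpd : ∀ q ∈ O, (g q).PosDef) (X : DOp E) {p : E}
    (hp : p ∈ O) : LM X (fun q => ((g q)⁻¹)ᵀ) p =
      - (((g p)⁻¹)ᵀ * (LM X g p)ᵀ * ((g p)⁻¹)ᵀ) := by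
  rw [LM_tr, LM_inv hO hg (fun q hq => (hpd q hq).isUnit) X hp]
  simp [Matrix.transpose_mul, Matrix.mul_assoc]

/-- Curvature of the dual metric. -/
lemma Ch_h (hO : IsOpen O) (hg : SmM O g) (hpd : ∀ q ∈ O, (g q).PosDef) (X Y : DOp E) {p : E}
    (hp : p ∈ O) :
    - LM X (LM Y (fun q => ((g q)⁻¹)ᵀ)) p
          + LM X (fun q => ((g q)⁻¹)ᵀ) p * (g p)ᵀ * LM Y (fun q => ((g q)⁻¹)ᵀ) p =
      - (((g p)⁻¹)ᵀ * (Ch X Y g p)ᵀ * ((g p)⁻¹)ᵀ) := by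
  have hu : IsUnit (g p).det := (Matrix.isUnit_iff_isUnit_det _).1 (hpd p hp).isUnit
  have hh := SmM_h hg hpd
  have hy := (hg.LM hO Y).tr
  have c1 : ∀ A : Matrix (Fin n) (Fin n) ℂ, A * ((g p)⁻¹)ᵀ * (g p)ᵀ = A := fun A => by
    rw [Matrix.mul_assoc, ← Matrix.transpose_mul, Matrix.mul_nonsing_inv _ hu,
      Matrix.transpose_one, Matrix.mul_one]
  rw [LM_congr hO (fun q hq => LM_h hO hg hpd Y hq) X hp, LM_neg, LM_triple hO hh hy hh X hp,
    LM_h hO hg hpd X hp, LM_h hO hg hpd Y hp, LM_tr, Ch]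
  simp only [Matrix.neg_mul, Matrix.mul_neg, c1, Matrix.transpose_add, Matrix.transpose_neg,
    Matrix.transpose_mul, Matrix.mul_add, Matrix.add_mul, neg_neg, neg_add_rev,
    ← Matrix.mul_assoc]
  abel

lemma fromBlocks_sum2 (c : Fin n → Fin n → ℂ)
    (A B C D : Fin n → Fin n → Matrix (Fin n) (Fin n) ℂ) :
    ∑ i, ∑ j, c i j • Matrix.fromBlocks (A i j) (B i j) (C i j) (D i j) =
      Matrix.fromBlocks (∑ i, ∑ j, c i j • A i j) (∑ i, ∑ j, c i j • B i j)
        (∑ i, ∑ j, c i j • C i j) (∑ i, ∑ j, c i j • D i j) := by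
  ext (a | a) (b | b) <;> simp [Matrix.sum_apply]

lemma mul_sum2 (c : Fin n → Fin n → ℂ) {ι : Type*} [Fintype ι]
    (A : Fin n → Fin n → Matrix ι ι ℂ) (P : Matrix ι ι ℂ) :
    P * (∑ i, ∑ j, c i j • A i j) = ∑ i, ∑ j, c i j • (P * A i j) := by
  simp only [Matrix.mul_sum, Matrix.mul_smul]

lemma sum2_mul (c : Fin n → Fin n → ℂ) {ι : Type*} [Fintype ι]
    (A : Fin n → Fin n → Matrix ι ι ℂ) (P : Matrix ι ι ℂ) :
    (∑ i, ∑ j, c i j • A i j) * P = ∑ i, ∑ j, c i j • (A i j * P) := by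
  simp only [Matrix.sum_mul, Matrix.smul_mul]

lemma neg_sum2 (c : Fin n → Fin n → ℂ) {ι : Type*} (A : Fin n → Fin n → Matrix ι ι ℂ) :
    - (∑ i, ∑ j, c i j • A i j) = ∑ i, ∑ j, c i j • (- A i j) := by
  simp only [smul_neg, Finset.sum_neg_distrib]

/-- The generalized metric evolves by its `g`-traced Chern curvature. -/
lemma evolution (hO : IsOpen O) (hg : SmM O g) (hβ : SmM O β)
    (hpd : ∀ q ∈ O, (g q).PosDef) (has : ∀ q ∈ O, (β q)ᵀ = - β q)
    (dz : Fin n → DOp E) (dt : DOp E) (hdt : dt.cj = dt) {p : E} (hp : p ∈ O)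
    (hgt : LM dt g p = ∑ i, ∑ j, (g p)⁻¹ j i • (- Ch (dz i) (dz j).cj g p
      + LM (dz j).cj β p * ((g p)⁻¹)ᵀ * LM (dz i) (fun q => (β q)ᴴ) p))
    (hbt : LM dt β p = ∑ i, ∑ j, (g p)⁻¹ j i • (LM (dz i) (LM (dz j).cj β) p
      - LM (dz i) g p * (g p)⁻¹ * LM (dz j).cj β p
      - LM (dz j).cj β p * ((g p)⁻¹)ᵀ * (LM (dz i) g p)ᵀ)) :
    LM dt (fun q => genMetric (g q) (β q)) p =
      - ∑ i, ∑ j, (g p)⁻¹ j i • Ch (dz i) (dz j).cj (fun q => genMetric (g q) (β q)) p := by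
  have hherm : ∀ q ∈ O, (g q)ᴴ = g q := fun q hq => (hpd q hq).isHermitian
  have hginv : ((g p)⁻¹)ᴴ = (g p)⁻¹ := (hpd p hp).isHermitian.inv
  have hbt' : LM dt (fun q => (β q)ᴴ) p = ∑ i, ∑ j, (g p)⁻¹ j i •
      (LM (dz i) (LM (dz j).cj (fun q => (β q)ᴴ)) p
      - LM (dz i) (fun q => (β q)ᴴ) p * (g p)⁻¹ * LM (dz j).cj g p
      - (LM (dz j).cj g p)ᵀ * ((g p)⁻¹)ᵀ * LM (dz i) (fun q => (β q)ᴴ) p) := by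
    rw [LM_ct hO hβ dt hp, hdt, hbt]
    simp only [Matrix.conjTranspose_sum, Matrix.conjTranspose_smul]
    rw [Finset.sum_comm]
    refine Finset.sum_congr rfl fun i _ => Finset.sum_congr rfl fun j _ => ?_
    have e1 : star ((g p)⁻¹ i j) = (g p)⁻¹ j i := by
      conv_rhs => rw [← hginv]
      rfl
    have e2 : ∀ k, (LM (dz k).cj β p)ᴴ = LM (dz k) (fun q => (β q)ᴴ) p := fun k =>
      (LM_ct hO hβ (dz k) hp).symm
    have e3 : ∀ k, (LM (dz k) g p)ᴴ = LM (dz k).cj g p := fun k => by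
      rw [← LM_congr hO hherm (dz k).cj hp, LM_ct hO hg (dz k).cj hp, DOp.cj_cj]
    have e4 : (((g p)⁻¹)ᵀ)ᴴ = ((g p)⁻¹)ᵀ := by
      have := congrArg Matrix.transpose hginv
      exact this
    have e5 : ((LM (dz j) g p)ᵀ)ᴴ = (LM (dz j).cj g p)ᵀ := by
      rw [← e3]; rfl
    have e6 : (LM (dz j) (LM (dz i).cj β) p)ᴴ = LM (dz i) (LM (dz j).cj (fun q => (β q)ᴴ)) p := by
      rw [LM_comm hO hβ.ct (dz i) (dz j).cj hp,
        LM_congr hO (fun q hq => LM_ct hO hβ (dz i) hq) (dz j).cj hp,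
        LM_ct hO (hβ.LM hO _) _ hp, DOp.cj_cj]
    rw [e1]
    simp only [Matrix.conjTranspose_sub, Matrix.conjTranspose_mul, e2, e3, e4, e5, e6, hginv,
      Matrix.mul_assoc]
  have has1 : ∀ X : DOp E, (LM X β p)ᵀ = - LM X β p := fun X => by
    rw [← LM_tr, LM_congr hO has X hp, LM_neg]
  have has2 : ∀ X : DOp E, (LM X (fun q => (β q)ᴴ) p)ᵀ = - LM X (fun q => (β q)ᴴ) p := fun X => by
    rw [LM_ct hO hβ X hp, ← Matrix.conjTranspose_neg, ← has1]; rfl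
  simp only [Ch_genMetric hO hg hβ hpd _ _ hp]
  rw [← sum2_mul, ← mul_sum2, LM_genMetric hO hg hβ hpd dt hp, fromBlocks_sum2,
    ← Matrix.neg_mul, ← Matrix.mul_neg, Matrix.fromBlocks_neg]
  congr 2
  rw [Matrix.fromBlocks_inj]
  refine ⟨?_, ?_, ?_, ?_⟩
  · rw [hgt, neg_sum2]
    refine Finset.sum_congr rfl fun i _ => Finset.sum_congr rfl fun j _ => ?_
    congr 1; abel
  · rw [hbt, neg_sum2, sum2_mul]
    refine Finset.sum_congr rfl fun i _ => Finset.sum_congr rfl fun j _ => ?_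
    congr 1
    rw [LM_h hO hg hpd _ hp]
    noncomm_ring
  · rw [hbt', neg_sum2, mul_sum2]
    refine Finset.sum_congr rfl fun i _ => Finset.sum_congr rfl fun j _ => ?_
    congr 1
    rw [LM_h hO hg hpd _ hp]
    noncomm_ring
  · rw [LM_h hO hg hpd _ hp, hgt]
    simp only [Matrix.transpose_sum, Matrix.transpose_smul]
    rw [mul_sum2, sum2_mul, neg_sum2, neg_sum2]
    refine Finset.sum_congr rfl fun i _ => Finset.sum_congr rfl fun j _ => ?_
    congr 1
    rw [Ch_h hO hg hpd _ _ hp]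
    simp only [Matrix.transpose_add, Matrix.transpose_neg, Matrix.transpose_mul,
      Matrix.transpose_transpose, has1, has2]
    noncomm_ring

end evolution2

/-! ### Wirtinger operators -/

section wirtinger

variable {n : ℕ}

/-- `∂ᵢ` on `ℂⁿ`. -/
def dzE (i : Fin n) : DOp (Fin n → ℂ) :=
  ⟨1 / 2, - Complex.I / 2, Pi.single i 1, Pi.single i Complex.I⟩

/-- `∂ᵢ` on `ℝ × ℂⁿ`. -/
def dzP (i : Fin n) : DOp (ℝ × (Fin n → ℂ)) :=
  ⟨1 / 2, - Complex.I / 2, (0, Pi.single i 1), (0, Pi.single i Complex.I)⟩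

/-- `∂ₜ` on `ℝ × ℂⁿ`. -/
def dtO (n : ℕ) : DOp (ℝ × (Fin n → ℂ)) := ⟨1, 0, (1, 0), 0⟩

lemma dtO_cj : (dtO n).cj = dtO n := by simp [dtO, DOp.cj]

lemma wd_eq (i : Fin n) (f : (Fin n → ℂ) → ℂ) : wd i f = LD (dzE i) f := by
  funext z; simp only [wd, LD, dzE]; ring

lemma wdb_eq (i : Fin n) (f : (Fin n → ℂ) → ℂ) : wdb i f = LD (dzE i).cj f := by
  have h2 : (starRingEnd ℂ) (2 : ℂ) = 2 := map_ofNat _ 2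
  funext z; simp [wdb, LD, dzE, DOp.cj, h2]; ring

lemma wdP_eq (i : Fin n) (f : ℝ × (Fin n → ℂ) → ℂ) : wdP i f = LD (dzP i) f := by
  funext z; simp only [wdP, LD, dzP]; ring

lemma wdbP_eq (i : Fin n) (f : ℝ × (Fin n → ℂ) → ℂ) : wdbP i f = LD (dzP i).cj f := by
  have h2 : (starRingEnd ℂ) (2 : ℂ) = 2 := map_ofNat _ 2
  funext z; simp [wdbP, LD, dzP, DOp.cj, h2]; ring

lemma dtP_eq (f : ℝ × (Fin n → ℂ) → ℂ) : dtP f = LD (dtO n) f := by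
  funext z; simp [dtP, LD, dtO]

variable {U : Set (Fin n → ℂ)}

lemma fderiv_of_snd (hU : IsOpen U) {f : (Fin n → ℂ) → ℂ} (hf : Sm U f) {p : ℝ × (Fin n → ℂ)}
    (hp : p.2 ∈ U) (v : ℝ × (Fin n → ℂ)) :
    fderiv ℝ (fun q : ℝ × (Fin n → ℂ) => f q.2) p v = fderiv ℝ f p.2 v.2 := by
  have h : fderiv ℝ (fun q : ℝ × (Fin n → ℂ) => f q.2) p = (fderiv ℝ f p.2).comp
      (ContinuousLinearMap.snd ℝ ℝ (Fin n → ℂ)) :=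
    ((hf.diffAt hU hp).hasFDerivAt.comp p hasFDerivAt_snd).fderiv
  rw [h]; rfl

lemma LM_snd_z (hU : IsOpen U) {ι κ : Type*} {A : (Fin n → ℂ) → Matrix ι κ ℂ} (hA : SmM U A)
    {p : ℝ × (Fin n → ℂ)} (hp : p.2 ∈ U) (i : Fin n) :
    LM (dzP i) (fun q => A q.2) p = LM (dzE i) A p.2 := by
  ext a b
  simp only [LM, Matrix.of_apply, LD, fderiv_of_snd hU (hA a b) hp]
  rfl

lemma LM_snd_zb (hU : IsOpen U) {ι κ : Type*} {A : (Fin n → ℂ) → Matrix ι κ ℂ} (hA : SmM U A)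
    {p : ℝ × (Fin n → ℂ)} (hp : p.2 ∈ U) (i : Fin n) :
    LM (dzP i).cj (fun q => A q.2) p = LM (dzE i).cj A p.2 := by
  ext a b
  simp only [LM, Matrix.of_apply, LD, fderiv_of_snd hU (hA a b) hp]
  rfl

lemma LM_snd_t (hU : IsOpen U) {ι κ : Type*} {A : (Fin n → ℂ) → Matrix ι κ ℂ} (hA : SmM U A)
    {p : ℝ × (Fin n → ℂ)} (hp : p.2 ∈ U) :
    LM (dtO n) (fun q => A q.2) p = 0 := by
  ext a b
  simp [LM, Matrix.of_apply, LD, fderiv_of_snd hU (hA a b) hp, dtO]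

lemma SmM_snd (I : Set ℝ) {ι κ : Type*} {A : (Fin n → ℂ) → Matrix ι κ ℂ} (hA : SmM U A) :
    SmM (I ×ˢ U) (fun q => A q.2) := fun a b =>
  ContDiffOn.comp (hA a b) contDiff_snd.contDiffOn (fun _ hq => hq.2)

lemma Ch_snd {I : Set ℝ} (hI : IsOpen I) (hU : IsOpen U) {ι : Type*} [Fintype ι] [DecidableEq ι]
    {A : (Fin n → ℂ) → Matrix ι ι ℂ} (hA : SmM U A)
    {p : ℝ × (Fin n → ℂ)} (hp : p ∈ I ×ˢ U) (i j : Fin n) :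
    Ch (dzP i) (dzP j).cj (fun q => A q.2) p = Ch (dzE i) (dzE j).cj A p.2 := by
  unfold Ch
  rw [LM_congr (hI.prod hU) (fun q hq => LM_snd_zb hU hA hq.2 j) (dzP i) hp,
    LM_snd_z hU (hA.LM hU _) hp.2, LM_snd_z hU hA hp.2, LM_snd_zb hU hA hp.2]

/-! ### Bounds -/

/-- The Wirtinger operators. -/
def WOps (n : ℕ) : Set (DOp (Fin n → ℂ)) := {D | ∃ i, D = dzE i ∨ D = (dzE i).cj}

lemma WOps_cj {D : DOp (Fin n → ℂ)} (h : D ∈ WOps n) : D.cj ∈ WOps n := by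
  obtain ⟨i, rfl | rfl⟩ := h
  · exact ⟨i, Or.inr rfl⟩
  · exact ⟨i, Or.inl (DOp.cj_cj _)⟩

/-- Bounds up to order two. -/
def BD (B : ℝ) (f : (Fin n → ℂ) → ℂ) (z : Fin n → ℂ) : Prop :=
  ‖f z‖ ≤ B ∧ (∀ D ∈ WOps n, ‖LD D f z‖ ≤ B) ∧
    ∀ D ∈ WOps n, ∀ D' ∈ WOps n, ‖LD D (LD D' f) z‖ ≤ B

lemma BD_of {B : ℝ} {f : (Fin n → ℂ) → ℂ} {z : Fin n → ℂ} (h : BoundedDerivs2 B f z) :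
    BD B f z := by
  obtain ⟨h0, h1, h2⟩ := h
  simp only [wd_eq, wdb_eq] at h1 h2
  refine ⟨h0, ?_, ?_⟩
  · rintro D ⟨i, rfl | rfl⟩
    · exact (h1 i).1
    · exact (h1 i).2
  · rintro D ⟨i, rfl | rfl⟩ D' ⟨j, rfl | rfl⟩
    · exact (h2 i j).1
    · exact (h2 i j).2.1
    · exact (h2 i j).2.2.1
    · exact (h2 i j).2.2.2

lemma BD.mono {B B' : ℝ} {f : (Fin n → ℂ) → ℂ} {z : Fin n → ℂ} (h : BD B f z) (hB : B ≤ B') :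
    BD B' f z :=
  ⟨h.1.trans hB, fun D hD => (h.2.1 D hD).trans hB,
    fun D hD D' hD' => (h.2.2 D hD D' hD').trans hB⟩

lemma BD.nonneg {B : ℝ} {f : (Fin n → ℂ) → ℂ} {z : Fin n → ℂ} (h : BD B f z) : 0 ≤ B :=
  (norm_nonneg _).trans h.1

lemma BD.add (hU : IsOpen U) {B B' : ℝ} {f k : (Fin n → ℂ) → ℂ} {z : Fin n → ℂ} (hz : z ∈ U)
    (sf : Sm U f) (sk : Sm U k) (hf : BD B f z) (hk : BD B' k z) :
    BD (B + B') (fun q => f q + k q) z := by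
  refine ⟨norm_add_le_of_le hf.1 hk.1, fun D hD => ?_, fun D hD D' hD' => ?_⟩
  · rw [LD_add hU sf sk D hz]
    exact norm_add_le_of_le (hf.2.1 D hD) (hk.2.1 D hD)
  · rw [LD_congr hU (fun q hq => LD_add hU sf sk D' hq) D hz,
      LD_add hU (sf.LD hU D') (sk.LD hU D') D hz]
    exact norm_add_le_of_le (hf.2.2 D hD D' hD') (hk.2.2 D hD D' hD')

lemma BD.sum (hU : IsOpen U) {B : ℝ} {ι : Type*} [Fintype ι] {f : ι → (Fin n → ℂ) → ℂ}
    {z : Fin n → ℂ} (hz : z ∈ U)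
    (sf : ∀ i, Sm U (f i)) (hf : ∀ i, BD B (f i) z) :
    BD (Fintype.card ι * B) (fun q => ∑ i, f i q) z := by
  have key : ∀ x : ι → ℂ, (∀ i, ‖x i‖ ≤ B) → ‖∑ i, x i‖ ≤ Fintype.card ι * B := by
    intro x hx
    refine (norm_sum_le_of_le _ fun i _ => hx i).trans ?_
    simp
  refine ⟨key _ fun i => (hf i).1, fun D hD => ?_, fun D hD D' hD' => ?_⟩
  · rw [LD_sum hU (fun i _ => sf i) D hz]
    exact key _ fun i => (hf i).2.1 D hD
  · rw [LD_congr hU (fun q hq => LD_sum hU (fun i _ => sf i) D' hq) D hz,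
      LD_sum hU (fun i _ => (sf i).LD hU D') D hz]
    exact key _ fun i => (hf i).2.2 D hD D' hD'

lemma BD.mul (hU : IsOpen U) {B B' : ℝ} {f k : (Fin n → ℂ) → ℂ} {z : Fin n → ℂ} (hz : z ∈ U)
    (sf : Sm U f) (sk : Sm U k) (hf : BD B f z) (hk : BD B' k z) :
    BD (4 * (B * B')) (fun q => f q * k q) z := by
  have hB := hf.nonneg
  have hB' := hk.nonneg
  have hBB := mul_nonneg hB hB'
  have key : ∀ x y : ℂ, ‖x‖ ≤ B → ‖y‖ ≤ B' → ‖x * y‖ ≤ B * B' := fun x y hx hy => by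
    rw [norm_mul]; exact mul_le_mul hx hy (norm_nonneg _) hB
  refine ⟨(key _ _ hf.1 hk.1).trans (by linarith), fun D hD => ?_, fun D hD D' hD' => ?_⟩
  · rw [LD_mul hU sf sk D hz]
    refine (norm_add_le_of_le (key _ _ (hf.2.1 D hD) hk.1) (key _ _ hf.1 (hk.2.1 D hD))).trans ?_
    linarith
  · rw [LD_congr hU (fun q hq => LD_mul hU sf sk D' hq) D hz,
      LD_add hU ((sf.LD hU D').mul sk) (sf.mul (sk.LD hU D')) D hz,
      LD_mul hU (sf.LD hU D') sk D hz, LD_mul hU sf (sk.LD hU D') D hz]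
    refine (norm_add_le_of_le
      (norm_add_le_of_le (key _ _ (hf.2.2 D hD D' hD') hk.1)
        (key _ _ (hf.2.1 D' hD') (hk.2.1 D hD)))
      (norm_add_le_of_le (key _ _ (hf.2.1 D hD) (hk.2.1 D' hD'))
        (key _ _ hf.1 (hk.2.2 D hD D' hD')))).trans ?_
    linarith

lemma BD.cj (hU : IsOpen U) {B : ℝ} {f : (Fin n → ℂ) → ℂ} {z : Fin n → ℂ} (hz : z ∈ U)
    (sf : Sm U f) (hf : BD B f z) : BD B (fun q => (starRingEnd ℂ) (f q)) z := by
  refine ⟨by simpa using hf.1, fun D hD => ?_, fun D hD D' hD' => ?_⟩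
  · rw [LD_cj hU sf D hz, RCLike.norm_conj]
    exact hf.2.1 _ (WOps_cj hD)
  · rw [LD_congr hU (fun q hq => LD_cj hU sf D' hq) D hz, LD_cj hU (sf.LD hU _) D hz,
      RCLike.norm_conj]
    exact hf.2.2 _ (WOps_cj hD) _ (WOps_cj hD')

def BDM {ι κ : Type*} (B : ℝ) (A : (Fin n → ℂ) → Matrix ι κ ℂ) (z : Fin n → ℂ) : Prop :=
  ∀ a b, BD B (fun q => A q a b) z

lemma BDM.mul (hU : IsOpen U) {B B' : ℝ} {A C : (Fin n → ℂ) → Matrix (Fin n) (Fin n) ℂ}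
    {z : Fin n → ℂ} (hz : z ∈ U) (sA : SmM U A) (sC : SmM U C) (hA : BDM B A z)
    (hC : BDM B' C z) : BDM (n * (4 * (B * B'))) (fun q => A q * C q) z := by
  intro a b
  simp only [Matrix.mul_apply]
  have := BD.sum (f := fun c q => A q a c * C q c b) hU hz (fun c => (sA a c).mul (sC c b))
    (fun c => BD.mul hU hz (sA a c) (sC c b) (hA a c) (hC c b))
  simpa using this

/-- The bound for the entries of the background generalized metric. -/
def Cbd (n : ℕ) (B : ℝ) : ℝ :=
  B + n * (4 * (B * B)) + n * (4 * (n * (4 * (B * B)) * B))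

lemma BDM_genMetric (hU : IsOpen U) {B : ℝ} (hB : 0 ≤ B)
    {g β : (Fin n → ℂ) → Matrix (Fin n) (Fin n) ℂ}
    {z : Fin n → ℂ} (hz : z ∈ U) (sg : SmM U g) (sb : SmM U β) (hpd : ∀ q ∈ U, (g q).PosDef)
    (hg : BDM B g z) (hgi : BDM B (fun q => (g q)⁻¹) z) (hβ : BDM B β z) :
    BDM (Cbd n B) (fun q => genMetric (g q) (β q)) z := by
  have sgi : SmM U (fun q => (g q)⁻¹) := sg.inv fun q hq => (hpd q hq).isUnit
  have sh : SmM U (fun q => ((g q)⁻¹).map (starRingEnd ℂ)) := fun a b => (sgi a b).cj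
  have hh : BDM B (fun q => ((g q)⁻¹).map (starRingEnd ℂ)) z := fun a b =>
    BD.cj hU hz (sgi a b) (hgi a b)
  have hbs : BDM B (fun q => (β q)ᴴ) z := fun a b => BD.cj hU hz (sb b a) (hβ b a)
  have h1 := BDM.mul hU hz sb sh hβ hh
  have h2 := BDM.mul hU hz sh sb.ct hh hbs
  have h3 := BDM.mul hU hz (sb.mul sh) sb.ct h1 hbs
  have hn : (0 : ℝ) ≤ n := Nat.cast_nonneg n
  have k1 : 0 ≤ n * (4 * (B * B)) := by positivity
  have k2 : 0 ≤ n * (4 * (n * (4 * (B * B)) * B)) := by positivity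
  rintro (a | a) (b | b)
  · refine (BD.add hU hz (sg a b) (((sb.mul sh).mul sb.ct) a b) (hg a b) (h3 a b)).mono ?_
    unfold Cbd; linarith
  · refine (h1 a b).mono ?_
    unfold Cbd; linarith
  · refine (h2 a b).mono ?_
    unfold Cbd; linarith
  · refine (hh a b).mono ?_
    unfold Cbd; linarith

lemma mul_entry_bound {ι : Type*} [Fintype ι] {X Y : Matrix ι ι ℂ} {x y : ℝ} (hx : 0 ≤ x)
    (hX : ∀ a b, ‖X a b‖ ≤ x) (hY : ∀ a b, ‖Y a b‖ ≤ y) (a b : ι) :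
    ‖(X * Y) a b‖ ≤ Fintype.card ι * (x * y) := by
  rw [Matrix.mul_apply]
  refine (norm_sum_le_of_le (f := fun c => X a c * Y c b) (n := fun _ => x * y) _
    fun c _ => ?_).trans ?_
  · rw [norm_mul]; exact mul_le_mul (hX a c) (hY c b) (norm_nonneg _) hx
  · simp

lemma trace_bound {ι : Type*} [Fintype ι] {X : Matrix ι ι ℂ} {x : ℝ}
    (hX : ∀ a b, ‖X a b‖ ≤ x) : ‖X.trace‖ ≤ Fintype.card ι * x := by
  refine (norm_sum_le_of_le (f := fun c => X c c) (n := fun _ => x) _ fun c _ => hX c c).trans ?_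
  simp

lemma Ch_bound {ι : Type*} [Fintype ι] [DecidableEq ι] {C : ℝ} (hC : 0 ≤ C)
    {A : (Fin n → ℂ) → Matrix ι ι ℂ} {z : Fin n → ℂ} (hA : BDM C A z)
    (hAi : ∀ a b, ‖(A z)⁻¹ a b‖ ≤ C) {D D' : DOp (Fin n → ℂ)} (hD : D ∈ WOps n)
    (hD' : D' ∈ WOps n) (a b : ι) :
    ‖Ch D D' A z a b‖ ≤ C + Fintype.card ι * (Fintype.card ι * (C * C) * C) := by
  unfold Ch
  rw [Matrix.add_apply, Matrix.neg_apply]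
  refine norm_add_le_of_le ?_ ?_
  · rw [norm_neg]; exact (hA a b).2.2 D hD D' hD'
  · exact mul_entry_bound (by positivity)
      (mul_entry_bound hC (fun a b => (hA a b).2.1 D hD) hAi) (fun a b => (hA a b).2.1 D' hD') a b

end wirtinger


/-! ### Final assembly -/

section final

variable {n : ℕ}

lemma Ch_apply_eq {ι : Type*} [Fintype ι] [DecidableEq ι]
    (h : ℝ × (Fin n → ℂ) → Matrix ι ι ℂ) (i j : Fin n) (a b : ι) (p : ℝ × (Fin n → ℂ)) :
    chernP h i j a b p = Ch (dzP i) (dzP j).cj h p a b := by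
  unfold chernP Ch
  simp only [wdP_eq, wdbP_eq, Matrix.add_apply, Matrix.neg_apply, Matrix.mul_apply,
    Finset.sum_mul]
  congr 1
  rw [Finset.sum_comm]
  rfl

lemma sum4_comm {κ : Type*} [Fintype κ] (f : κ → κ → κ → κ → ℂ) :
    ∑ k, ∑ l, ∑ m, ∑ m', f k l m m' = ∑ m, ∑ m', ∑ l, ∑ k, f k l m m' := by
  have h1 : ∀ k, ∑ l, ∑ m, ∑ m', f k l m m' = ∑ m, ∑ m', ∑ l, f k l m m' := fun k => by
    rw [Finset.sum_comm]
    exact Finset.sum_congr rfl fun m _ => Finset.sum_comm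
  simp only [h1]
  rw [Finset.sum_comm]
  refine Finset.sum_congr rfl fun m _ => ?_
  rw [Finset.sum_comm]
  exact Finset.sum_congr rfl fun m' _ => Finset.sum_comm

variable {g β : ℝ × (Fin n → ℂ) → Matrix (Fin n) (Fin n) ℂ} {O : Set (ℝ × (Fin n → ℂ))}

lemma flow_g (hO : IsOpen O) (hβ : SmM O β) {p : ℝ × (Fin n → ℂ)} (hp : p ∈ O)
    (htor : ∀ i j k : Fin n, wdbP k (fun q => β q i j) p = torsionP g i j k p)
    (hfl : ∀ i j : Fin n,
      dtP (fun q => g q i j) p = - traceChernP g g i j p + torsionSqP g i j p) :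
    LM (dtO n) g p = ∑ i, ∑ j, (g p)⁻¹ j i • (- Ch (dzP i) (dzP j).cj g p
      + LM (dzP j).cj β p * ((g p)⁻¹)ᵀ * LM (dzP i) (fun q => (β q)ᴴ) p) := by
  ext a b
  have h0 : LM (dtO n) g p a b = dtP (fun q => g q a b) p := by rw [dtP_eq]; rfl
  rw [h0, hfl]
  unfold traceChernP torsionSqP
  simp only [← htor, Ch_apply_eq]
  rw [sum4_comm]
  simp only [Matrix.sum_apply, Matrix.smul_apply, Matrix.add_apply, Matrix.neg_apply,
    smul_eq_mul, mul_add, Finset.sum_add_distrib, mul_neg, Finset.sum_neg_distrib]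
  congr 1
  refine Finset.sum_congr rfl fun i _ => Finset.sum_congr rfl fun j _ => ?_
  rw [LM_ct hO hβ _ hp, Matrix.mul_apply, Finset.mul_sum, Finset.sum_comm]
  refine Finset.sum_congr rfl fun k _ => ?_
  rw [Matrix.mul_apply, Finset.sum_mul, Finset.mul_sum]
  refine Finset.sum_congr rfl fun l _ => ?_
  simp only [wdbP_eq, Matrix.transpose_apply, Matrix.conjTranspose_apply]
  have e1 : LM (dzP j).cj β p a l = LD (dzP j).cj (fun q => β q a l) p := rfl
  have e2 : LM (dzP i).cj β p b k = LD (dzP i).cj (fun q => β q b k) p := rfl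
  rw [e1, e2]
  simp only [starRingEnd_apply]
  ring

lemma flow_b {p : ℝ × (Fin n → ℂ)}
    (hfl : ∀ i j : Fin n, dtP (fun q => β q i j) p = lapBetaP g β i j p) :
    LM (dtO n) β p = ∑ i, ∑ j, (g p)⁻¹ j i • (LM (dzP i) (LM (dzP j).cj β) p
      - LM (dzP i) g p * (g p)⁻¹ * LM (dzP j).cj β p
      - LM (dzP j).cj β p * ((g p)⁻¹)ᵀ * (LM (dzP i) g p)ᵀ) := by
  ext a b
  have h0 : LM (dtO n) β p a b = dtP (fun q => β q a b) p := by rw [dtP_eq]; rfl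
  rw [h0, hfl]
  unfold lapBetaP nabla2betaP
  simp only [Matrix.sum_apply, Matrix.smul_apply, Matrix.sub_apply, smul_eq_mul]
  refine Finset.sum_congr rfl fun i _ => Finset.sum_congr rfl fun j _ => ?_
  simp only [wdP_eq, wdbP_eq]
  congr 2
  · congr 1
    rw [Matrix.mul_apply, Finset.sum_comm]
    refine Finset.sum_congr rfl fun l _ => ?_
    rw [Matrix.mul_apply, Finset.sum_mul]
    refine Finset.sum_congr rfl fun k _ => ?_
    have e1 : LM (dzP i) g p a k = LD (dzP i) (fun q => g q a k) p := rfl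
    have e2 : LM (dzP j).cj β p l b = LD (dzP j).cj (fun q => β q l b) p := rfl
    rw [e1, e2]; ring
  · rw [Matrix.mul_apply]
    refine Finset.sum_congr rfl fun k _ => ?_
    rw [Matrix.mul_apply, Finset.sum_mul]
    refine Finset.sum_congr rfl fun l _ => ?_
    have e1 : LM (dzP i) g p b k = LD (dzP i) (fun q => g q b k) p := rfl
    have e2 : LM (dzP j).cj β p a l = LD (dzP j).cj (fun q => β q a l) p := rfl
    rw [Matrix.transpose_apply, Matrix.transpose_apply, e1, e2]; ring

lemma trace_four {ι : Type*} [Fintype ι] (W Y H Z : Matrix ι ι ℂ) :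
    (W * Y * H * Zᴴ).trace =
      ∑ A, ∑ B, ∑ D, ∑ E, W B A * H D E * Y A D * (starRingEnd ℂ) (Z B E) := by
  rw [Matrix.mul_assoc, Matrix.mul_assoc, Matrix.trace, Finset.sum_comm]
  refine Finset.sum_congr rfl fun B _ => ?_
  rw [Matrix.diag_apply, Matrix.mul_apply]
  refine Finset.sum_congr rfl fun A _ => ?_
  rw [Matrix.mul_apply, Finset.mul_sum]
  refine Finset.sum_congr rfl fun D _ => ?_
  rw [Matrix.mul_apply, Finset.mul_sum, Finset.mul_sum]
  refine Finset.sum_congr rfl fun E _ => ?_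
  rw [Matrix.conjTranspose_apply, starRingEnd_apply]
  ring

/-- The difference of the connections as a matrix. -/
def Up {ι : Type*} [Fintype ι] [DecidableEq ι] (G H : ℝ × (Fin n → ℂ) → Matrix ι ι ℂ)
    (p : ℝ × (Fin n → ℂ)) (i : Fin n) : Matrix ι ι ℂ :=
  LM (dzP i) G p * (G p)⁻¹ - LM (dzP i) H p * (H p)⁻¹

lemma UpsP_eq {ι : Type*} [Fintype ι] [DecidableEq ι] (G H : ℝ × (Fin n → ℂ) → Matrix ι ι ℂ)
    (p : ℝ × (Fin n → ℂ)) (i : Fin n) (A D : ι) : UpsP G H i A D p = Up G H p i A D := by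
  unfold UpsP Up
  rw [Matrix.sub_apply, Matrix.mul_apply, Matrix.mul_apply, ← Finset.sum_sub_distrib]
  simp only [wdP_eq]
  rfl

lemma upsNormP_eq {ι : Type*} [Fintype ι] [DecidableEq ι] (G H K : ℝ × (Fin n → ℂ) → Matrix ι ι ℂ)
    (p : ℝ × (Fin n → ℂ)) :
    upsNormP g G H K p =
      ∑ i, ∑ j, (g p)⁻¹ j i * ((G p)⁻¹ * Up G H p i * K p * (Up G H p j)ᴴ).trace := by
  unfold upsNormP
  refine Finset.sum_congr rfl fun i _ => Finset.sum_congr rfl fun j _ => ?_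
  rw [trace_four]
  simp only [Finset.mul_sum, UpsP_eq]
  refine Finset.sum_congr rfl fun A _ => Finset.sum_congr rfl fun B _ =>
    Finset.sum_congr rfl fun D _ => Finset.sum_congr rfl fun E _ => ?_
  ring

lemma Up_ct {ι : Type*} [Fintype ι] [DecidableEq ι] {G H : ℝ × (Fin n → ℂ) → Matrix ι ι ℂ}
    (hO : IsOpen O) (hG : SmM O G) (hH : SmM O H) (kG : ∀ q ∈ O, (G q).IsHermitian)
    (kH : ∀ q ∈ O, (H q).IsHermitian) {p : ℝ × (Fin n → ℂ)} (hp : p ∈ O) (j : Fin n) :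
    (Up G H p j)ᴴ = (G p)⁻¹ * LM (dzP j).cj G p - (H p)⁻¹ * LM (dzP j).cj H p := by
  have key : ∀ {A : ℝ × (Fin n → ℂ) → Matrix ι ι ℂ}, SmM O A → (∀ q ∈ O, (A q).IsHermitian) →
      (LM (dzP j) A p)ᴴ = LM (dzP j).cj A p := by
    intro A sA kA
    rw [LM_congr hO (fun q hq => (kA q hq).symm) (dzP j).cj hp, LM_ct hO sA _ hp, DOp.cj_cj]
  unfold Up
  rw [Matrix.conjTranspose_sub, Matrix.conjTranspose_mul, Matrix.conjTranspose_mul,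
    key hG kG, key hH kH, (kG p hp).inv.eq, (kH p hp).inv.eq]

/-- The main identity. -/
lemma heat_identity {ι : Type*} [Fintype ι] [DecidableEq ι]
    {G H : ℝ × (Fin n → ℂ) → Matrix ι ι ℂ}
    (hO : IsOpen O) (hG : SmM O G) (hH : SmM O H) (kG : ∀ q ∈ O, (G q).IsHermitian)
    (kH : ∀ q ∈ O, (H q).IsHermitian) (uG : ∀ q ∈ O, IsUnit (G q)) (uH : ∀ q ∈ O, IsUnit (H q))
    {p : ℝ × (Fin n → ℂ)} (hp : p ∈ O) (ht : LM (dtO n) H p = 0)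
    (hev : LM (dtO n) G p = - ∑ i, ∑ j, (g p)⁻¹ j i • Ch (dzP i) (dzP j).cj G p) :
    dtP (fun q => ((G q)⁻¹ * H q).trace) p - lapP g (fun q => ((G q)⁻¹ * H q).trace) p =
      - (∑ i, ∑ j, (g p)⁻¹ j i * ((G p)⁻¹ * Up G H p i * H p * (Up G H p j)ᴴ).trace)
      + ∑ i, ∑ j, (g p)⁻¹ j i * ((G p)⁻¹ * Ch (dzP i) (dzP j).cj H p).trace := by
  have h1 : lapP g (fun q => ((G q)⁻¹ * H q).trace) p =
      ∑ i, ∑ j, ((g p)⁻¹ j i * ((G p)⁻¹ * Ch (dzP i) (dzP j).cj G p * (G p)⁻¹ * H p).trace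
        + (g p)⁻¹ j i * ((G p)⁻¹ * Up G H p i * H p * (Up G H p j)ᴴ).trace
        - (g p)⁻¹ j i * ((G p)⁻¹ * Ch (dzP i) (dzP j).cj H p).trace) := by
    unfold lapP
    refine Finset.sum_congr rfl fun i _ => Finset.sum_congr rfl fun j _ => ?_
    have h2 := LD_LD_trace hO hG hH uG uH (dzP i) (dzP j).cj hp
    rw [Up_ct hO hG hH kG kH hp]
    simp only [wdP_eq, wdbP_eq]
    rw [← mul_add, ← mul_sub]
    exact congrArg _ h2
  have h3 : dtP (fun q => ((G q)⁻¹ * H q).trace) p =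
      ∑ i, ∑ j, (g p)⁻¹ j i * ((G p)⁻¹ * Ch (dzP i) (dzP j).cj G p * (G p)⁻¹ * H p).trace := by
    rw [dtP_eq, LD_trace hO hG hH uG _ hp ht, hev]
    simp only [Matrix.mul_neg, Matrix.neg_mul, Matrix.trace_neg, neg_neg, Matrix.mul_sum,
      Matrix.sum_mul, Matrix.mul_smul, Matrix.smul_mul, Matrix.trace_sum, Matrix.trace_smul,
      smul_eq_mul]
  rw [h1, h3]
  simp only [Finset.sum_sub_distrib, Finset.sum_add_distrib]
  ring

/-- The constant. -/
def Kc (n : ℕ) (Λ B : ℝ) : ℝ :=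
  let N : ℝ := Fintype.card (Fin n ⊕ Fin n)
  let C := Cbd n B
  let M := Λ * C + Λ * C
  n * (n * (M * (N * (N * (M * (C + N * (N * (C * C) * C)))))))

end final


/-- Corollary 3.7: along pluriclosed flow, if `Λ⁻¹·G̃ ≤ G ≤ Λ·G̃`, then
`(∂ₜ − Δ)(tr(G⁻¹·G̃)) ≤ −Λ⁻¹·|Υ|²_{g⁻¹,G⁻¹,G} + K`, where `K` depends only on `n`, `Λ`,
and an upper bound `B` on `U` for the entries of `g̃`, `g̃⁻¹`, `β̃` and their Wirtinger
derivatives up to order two. -/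
theorem trace_heat_inequality (n : ℕ) (hn : 0 < n) (Λ B : ℝ) (hΛ : 1 ≤ Λ) :
    ∃ K : ℝ,
      ∀ (I : Set ℝ), IsOpen I → ∀ (U : Set (Fin n → ℂ)), IsOpen U →
      ∀ g β : ℝ × (Fin n → ℂ) → Matrix (Fin n) (Fin n) ℂ,
      ∀ gt βt : (Fin n → ℂ) → Matrix (Fin n) (Fin n) ℂ,
        (∀ a b : Fin n, ContDiffOn ℝ (⊤ : ℕ∞) (fun q => g q a b) (I ×ˢ U)) →
        (∀ a b : Fin n, ContDiffOn ℝ (⊤ : ℕ∞) (fun q => β q a b) (I ×ˢ U)) →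
        (∀ a b : Fin n, ContDiffOn ℝ (⊤ : ℕ∞) (fun z => gt z a b) U) →
        (∀ a b : Fin n, ContDiffOn ℝ (⊤ : ℕ∞) (fun z => βt z a b) U) →
        (∀ p ∈ I ×ˢ U, (g p).PosDef) →
        (∀ p ∈ I ×ˢ U, (β p)ᵀ = -(β p)) →
        (∀ z ∈ U, (gt z).PosDef) →
        (∀ z ∈ U, (βt z)ᵀ = -(βt z)) →
        -- β is a torsion potential for g
        (∀ p ∈ I ×ˢ U, ∀ i j k : Fin n,
          wdbP k (fun q => β q i j) p = torsionP g i j k p) →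
        -- pluriclosed flow equations
        (∀ p ∈ I ×ˢ U, ∀ i j : Fin n,
          dtP (fun q => g q i j) p = - traceChernP g g i j p + torsionSqP g i j p) →
        (∀ p ∈ I ×ˢ U, ∀ i j : Fin n,
          dtP (fun q => β q i j) p = lapBetaP g β i j p) →
        -- uniform equivalence Λ⁻¹·G̃ ≤ G ≤ Λ·G̃ of the generalized metrics
        (∀ p ∈ I ×ˢ U,
          (genMetric (g p) (β p) - ((Λ : ℂ))⁻¹ • genMetric (gt p.2) (βt p.2)).PosSemidef ∧
          ((Λ : ℂ) • genMetric (gt p.2) (βt p.2) - genMetric (g p) (β p)).PosSemidef) →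
        -- bounds on the background up to order two
        (∀ z ∈ U, ∀ a b : Fin n,
          BoundedDerivs2 B (fun w => gt w a b) z ∧
          BoundedDerivs2 B (fun w => (gt w)⁻¹ a b) z ∧
          BoundedDerivs2 B (fun w => βt w a b) z) →
        ∀ p ∈ I ×ˢ U,
          (dtP (fun q => Matrix.trace ((genMetric (g q) (β q))⁻¹ * genMetric (gt q.2) (βt q.2))) p
            - lapP g (fun q =>
                Matrix.trace ((genMetric (g q) (β q))⁻¹ * genMetric (gt q.2) (βt q.2))) p).re ≤
            - Λ⁻¹ * (upsNormP g (fun q => genMetric (g q) (β q))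
                (fun q => genMetric (gt q.2) (βt q.2)) (fun q => genMetric (g q) (β q)) p).re
              + K := by
  refine ⟨Kc n Λ B, ?_⟩
  intro I hI U hU g β gt βt hg hβ hgt hβt pg aβ pgt aβt htor flg flb hLam hbd p hp
  have hO : IsOpen (I ×ˢ U) := hI.prod hU
  have sH0 : SmM U (fun z => genMetric (gt z) (βt z)) := SmM_genMetric hgt hβt pgt
  have sG : SmM (I ×ˢ U) (fun q => genMetric (g q) (β q)) := SmM_genMetric hg hβ pg
  have sH : SmM (I ×ˢ U) (fun q => genMetric (gt q.2) (βt q.2)) := SmM_snd I sH0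
  have hev := evolution hO hg hβ pg aβ dzP (dtO n) dtO_cj hp
    (flow_g hO hβ hp (htor p hp) (flg p hp)) (flow_b (flb p hp))
  have hid := heat_identity (g := g) hO sG sH
    (fun q hq => (genMetric_posSemidef (β q) (pg q hq)).isHermitian)
    (fun q hq => (genMetric_posSemidef (βt q.2) (pgt q.2 hq.2)).isHermitian)
    (fun q hq => genMetric_isUnit (β q) (pg q hq))
    (fun q hq => genMetric_isUnit (βt q.2) (pgt q.2 hq.2)) hp (LM_snd_t hU sH0 hp.2) hev
  rw [hid, upsNormP_eq]
  have hΛ0 : (0 : ℝ) < Λ := by linarith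
  have hz := hp.2
  obtain ⟨-, hL2⟩ := hLam p hp
  set Y := Up (fun q => genMetric (g q) (β q)) (fun q => genMetric (gt q.2) (βt q.2)) p with hY
  -- the good term
  have hgood : Λ⁻¹ * (∑ i, ∑ j, (g p)⁻¹ j i * ((genMetric (g p) (β p))⁻¹ * Y i *
        genMetric (g p) (β p) * (Y j)ᴴ).trace).re ≤
      (∑ i, ∑ j, (g p)⁻¹ j i * ((genMetric (g p) (β p))⁻¹ * Y i *
        genMetric (gt p.2) (βt p.2) * (Y j)ᴴ).trace).re := by
    have h := quad_nonneg (pg p hp).inv.posSemidef (genMetric_inv_posSemidef (pg p hp) (aβ p hp))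
      hL2 Y
    have e : ∑ i, ∑ j, (g p)⁻¹ j i * ((genMetric (g p) (β p))⁻¹ * Y i *
        ((Λ : ℂ) • genMetric (gt p.2) (βt p.2) - genMetric (g p) (β p)) * (Y j)ᴴ).trace =
        (Λ : ℂ) * (∑ i, ∑ j, (g p)⁻¹ j i * ((genMetric (g p) (β p))⁻¹ * Y i *
          genMetric (gt p.2) (βt p.2) * (Y j)ᴴ).trace) -
        ∑ i, ∑ j, (g p)⁻¹ j i * ((genMetric (g p) (β p))⁻¹ * Y i *
          genMetric (g p) (β p) * (Y j)ᴴ).trace := by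
      rw [Finset.mul_sum, ← Finset.sum_sub_distrib]
      refine Finset.sum_congr rfl fun i _ => ?_
      rw [Finset.mul_sum, ← Finset.sum_sub_distrib]
      refine Finset.sum_congr rfl fun j _ => ?_
      rw [Matrix.mul_sub, Matrix.sub_mul, Matrix.trace_sub, Matrix.mul_smul, Matrix.smul_mul,
        Matrix.trace_smul, smul_eq_mul]
      ring
    rw [e, Complex.sub_re, Complex.re_ofReal_mul] at h
    rw [inv_mul_le_iff₀ hΛ0]
    linarith
  -- bounds
  have hB : 0 ≤ B := (norm_nonneg _).trans (hbd p.2 hz ⟨0, hn⟩ ⟨0, hn⟩).1.1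
  have hHb : BDM (Cbd n B) (fun z => genMetric (gt z) (βt z)) p.2 :=
    BDM_genMetric hU hB hz hgt hβt pgt (fun a b => BD_of (hbd p.2 hz a b).1)
      (fun a b => BD_of (hbd p.2 hz a b).2.1) (fun a b => BD_of (hbd p.2 hz a b).2.2)
  have hC : 0 ≤ Cbd n B := (hHb (Sum.inl ⟨0, hn⟩) (Sum.inl ⟨0, hn⟩)).nonneg
  have hM : 0 ≤ Λ * Cbd n B + Λ * Cbd n B := by positivity
  have hHi : ∀ a b, ‖(genMetric (gt p.2) (βt p.2))⁻¹ a b‖ ≤ Cbd n B := by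
    intro a b
    rw [genMetric_inv_eq_swap (pgt p.2 hz) (aβt p.2 hz)]
    exact (hHb _ _).1
  have hdiag : ∀ x, (genMetric (g p) (β p) x x).re ≤ Λ * Cbd n B := by
    intro x
    have h1 := (hL2.diag_nonneg (i := x))
    have h2 := (Complex.le_def.1 h1).1
    rw [Matrix.sub_apply, Matrix.smul_apply, smul_eq_mul, Complex.sub_re,
      Complex.re_ofReal_mul, Complex.zero_re] at h2
    have h3 := (Complex.re_le_norm _).trans (hHb x x).1
    have h4 := mul_le_mul_of_nonneg_left h3 hΛ0.le
    linarith
  have hGe : ∀ x y, ‖genMetric (g p) (β p) x y‖ ≤ Λ * Cbd n B + Λ * Cbd n B := fun x y =>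
    (posSemidef_entry (genMetric_posSemidef (β p) (pg p hp)) x y).trans
      (add_le_add (hdiag x) (hdiag y))
  have hWe : ∀ x y, ‖(genMetric (g p) (β p))⁻¹ x y‖ ≤ Λ * Cbd n B + Λ * Cbd n B := by
    intro x y
    rw [genMetric_inv_eq_swap (pg p hp) (aβ p hp)]
    exact hGe _ _
  have hge : ∀ i j, ‖(g p)⁻¹ i j‖ ≤ Λ * Cbd n B + Λ * Cbd n B := by
    intro i j
    have h := hGe (Sum.inr i) (Sum.inr j)
    have e : genMetric (g p) (β p) (Sum.inr i) (Sum.inr j) = (starRingEnd ℂ) ((g p)⁻¹ i j) := rfl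
    rwa [e, RCLike.norm_conj] at h
  have hrem : (∑ i, ∑ j, (g p)⁻¹ j i * ((genMetric (g p) (β p))⁻¹ *
      Ch (dzP i) (dzP j).cj (fun q => genMetric (gt q.2) (βt q.2)) p).trace).re ≤ Kc n Λ B := by
    refine (Complex.re_le_norm _).trans ?_
    have key : ∀ i j, ‖(g p)⁻¹ j i * ((genMetric (g p) (β p))⁻¹ *
        Ch (dzP i) (dzP j).cj (fun q => genMetric (gt q.2) (βt q.2)) p).trace‖ ≤
        (Λ * Cbd n B + Λ * Cbd n B) * (Fintype.card (Fin n ⊕ Fin n) *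
          (Fintype.card (Fin n ⊕ Fin n) * ((Λ * Cbd n B + Λ * Cbd n B) *
            (Cbd n B + Fintype.card (Fin n ⊕ Fin n) *
              (Fintype.card (Fin n ⊕ Fin n) * (Cbd n B * Cbd n B) * Cbd n B))))) := by
      intro i j
      rw [norm_mul, Ch_snd hI hU sH0 hp]
      refine mul_le_mul (hge j i) (trace_bound (mul_entry_bound hM hWe
        (Ch_bound hC hHb hHi ⟨i, Or.inl rfl⟩ ⟨j, Or.inr rfl⟩))) (norm_nonneg _) hM
    refine (norm_sum_le_of_le _ fun i _ => norm_sum_le_of_le _ fun j _ => key i j).trans ?_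
    simp [Kc]
  rw [Complex.add_re, Complex.neg_re]
  linarith
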